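/- arXiv:1409.6520 — 2 statements merged into one kernel-verified Lean document; each statement's English description precedes it below -/
import Mathlib

section
/- If (μ_k) is a sequence in M(ℝ;S) converging weakly* to μ ∈ M(ℝ;S), and (w_k) is a sequence of locally integrable measurable functions ℝ → ℝⁿ converging weakly* (i.e. tested against C⁰_c(ℝ;ℝⁿ)) to a locally integrable w : ℝ → ℝⁿ, then liminf_{k→∞} Φ(μ_k, w_k) ≥ Φ(μ, w). -/
open MeasureTheory Filter Topology Set Matrix
open scoped ENNReal

noncomputable section

/-- First directional derivative of a matrix-valued map. -/
def matDirDeriv {n : ℕ} (M : (Fin n → ℝ) → Matrix (Fin n) (Fin n) ℝ)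
    (z ζ : Fin n → ℝ) : Matrix (Fin n) (Fin n) ℝ :=
  Matrix.of fun i j => deriv (fun t : ℝ => M (z + t • ζ) i j) 0

/-- Second directional derivative of a matrix-valued map. -/
def matDirDeriv2 {n : ℕ} (M : (Fin n → ℝ) → Matrix (Fin n) (Fin n) ℝ)
    (z ζ ζ' : Fin n → ℝ) : Matrix (Fin n) (Fin n) ℝ :=
  Matrix.of fun i j =>
    deriv (fun s : ℝ => deriv (fun t : ℝ => M (z + t • ζ + s • ζ') i j) 0) 0

/-- Conditions (C0)-(C2) on a mobility matrix. -/
structure IsMobility {n : ℕ} (S : Set (Fin n → ℝ))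
    (M : (Fin n → ℝ) → Matrix (Fin n) (Fin n) ℝ) : Prop where
  cont : ∀ i j, ContinuousOn (fun z => M z i j) S
  smooth : ∀ i j, ContDiffOn ℝ (⊤ : ℕ∞) (fun z => M z i j) (interior S)
  symm : ∀ z ∈ interior S, (M z).IsSymm
  posDef : ∀ z ∈ interior S, (M z).PosDef
  concave : ∀ z ∈ interior S, ∀ ζ : Fin n → ℝ, (-(matDirDeriv2 M z ζ ζ)).PosSemidef

/-- Condition (C3): M(z)ν = 0 for z ∈ ∂S and ν normal to ∂S at z. -/
def MobC3 {n : ℕ} (S : Set (Fin n → ℝ)) (M : (Fin n → ℝ) → Matrix (Fin n) (Fin n) ℝ) : Prop :=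
  ∀ z ∈ frontier S, ∀ ν : Fin n → ℝ, (∀ y ∈ S, ν ⬝ᵥ (y - z) ≤ 0) → M z *ᵥ ν = 0

/-- Action density φ̃(z,p) = pᵀ M(z)⁻¹ p. -/
def actDens {n : ℕ} (M : (Fin n → ℝ) → Matrix (Fin n) (Fin n) ℝ)
    (z p : Fin n → ℝ) : ℝ := p ⬝ᵥ ((M z)⁻¹ *ᵥ p)

/-- Lower semicontinuous envelope of the action density. -/
def actDensLsc {n : ℕ} (M : (Fin n → ℝ) → Matrix (Fin n) (Fin n) ℝ)
    (S : Set (Fin n → ℝ)) (z p : Fin n → ℝ) : ℝ≥0∞ :=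
  Filter.liminf (fun q : (Fin n → ℝ) × (Fin n → ℝ) => ENNReal.ofReal (actDens M q.1 q.2))
    (𝓝 (z, p) ⊓ Filter.principal {q | q.1 ∈ interior S})

/-- Action functional Φ(μ,w) = ∫ φ(μ(x),w(x)) dx. -/
def action {n : ℕ} (M : (Fin n → ℝ) → Matrix (Fin n) (Fin n) ℝ) (S : Set (Fin n → ℝ))
    (μ w : ℝ → Fin n → ℝ) : ℝ≥0∞ :=
  ∫⁻ x : ℝ, actDensLsc M S (μ x) (w x)

/-- Membership in M(ℝ;S): measurable with values in S. -/
def MemM {n : ℕ} (S : Set (Fin n → ℝ)) (μ : ℝ → Fin n → ℝ) : Prop :=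
  Measurable μ ∧ ∀ x, μ x ∈ S

/-- Weak* convergence of a sequence, tested against continuous compactly supported functions. -/
def WeakStarTendsto {n : ℕ} (μk : ℕ → ℝ → Fin n → ℝ) (μ : ℝ → Fin n → ℝ) : Prop :=
  ∀ ρ : ℝ → Fin n → ℝ, Continuous ρ → HasCompactSupport ρ →
    Tendsto (fun k => ∫ x : ℝ, μk k x ⬝ᵥ ρ x) atTop (𝓝 (∫ x : ℝ, μ x ⬝ᵥ ρ x))

/-- Distributional solution of the continuity equation ∂ₜμ + ∂ₓw = 0 on (0,T)×ℝ. -/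
def IsDistribSol {n : ℕ} (T : ℝ) (μ w : ℝ → ℝ → Fin n → ℝ) : Prop :=
  ∀ η : ℝ × ℝ → Fin n → ℝ, ContDiff ℝ (⊤ : ℕ∞) η → HasCompactSupport η →
    tsupport η ⊆ Set.Ioo 0 T ×ˢ Set.univ →
    ∫ q : ℝ × ℝ, ((fderiv ℝ η q (1, 0)) ⬝ᵥ μ q.1 q.2 + (fderiv ℝ η q (0, 1)) ⬝ᵥ w q.1 q.2) = 0

/-- The class 𝒞_T of admissible curves. -/
structure MemCT {n : ℕ} (S : Set (Fin n → ℝ)) (T : ℝ) (μ w : ℝ → ℝ → Fin n → ℝ) : Prop where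
  memS : ∀ t ∈ Set.Icc (0:ℝ) T, ∀ x : ℝ, μ t x ∈ S
  meas : ∀ t ∈ Set.Icc (0:ℝ) T, Measurable (μ t)
  wsc : ∀ ρ : ℝ → Fin n → ℝ, Continuous ρ → HasCompactSupport ρ →
      ContinuousOn (fun t => ∫ x : ℝ, μ t x ⬝ᵥ ρ x) (Set.Icc 0 T)
  wmeas : Measurable (Function.uncurry w)
  wint : ∀ R > (0:ℝ),
      (∫⁻ t in Set.Icc (0:ℝ) T, ∫⁻ x in Set.Icc (-R) R, ENNReal.ofReal ‖w t x‖) < ⊤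
  sol : IsDistribSol T μ w

/-- Energy of a curve. -/
def energy {n : ℕ} (M : (Fin n → ℝ) → Matrix (Fin n) (Fin n) ℝ) (S : Set (Fin n → ℝ))
    (T : ℝ) (μ w : ℝ → ℝ → Fin n → ℝ) : ℝ≥0∞ :=
  ∫⁻ t in Set.Icc (0:ℝ) T, action M S (μ t) (w t)

/-- The class 𝒞_T(μ₀ → μ₁). -/
def MemCTEnds {n : ℕ} (S : Set (Fin n → ℝ)) (T : ℝ) (μ w : ℝ → ℝ → Fin n → ℝ)
    (μ₀ μ₁ : ℝ → Fin n → ℝ) : Prop :=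
  MemCT S T μ w ∧ μ 0 = μ₀ ∧ μ T = μ₁

/-- The transport distance W_M, with values in [0,∞]. -/
def WM {n : ℕ} (M : (Fin n → ℝ) → Matrix (Fin n) (Fin n) ℝ) (S : Set (Fin n → ℝ))
    (μ₀ μ₁ : ℝ → Fin n → ℝ) : ℝ≥0∞ :=
  sInf { e : ℝ≥0∞ | ∃ μ w, MemCTEnds S 1 μ w μ₀ μ₁ ∧ e = (energy M S 1 μ w) ^ (1/2 : ℝ) }

/-- Second moment ℓ₂(ν) = ∫ x² eᵀν(x) dx. -/
def mom2 {n : ℕ} (ν : ℝ → Fin n → ℝ) : ℝ≥0∞ :=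
  ∫⁻ x : ℝ, ENNReal.ofReal (x ^ 2 * ∑ j, ν x j)

/-- Hessian matrix of a scalar function on ℝⁿ. -/
def hess {n : ℕ} (h : (Fin n → ℝ) → ℝ) (z : Fin n → ℝ) : Matrix (Fin n) (Fin n) ℝ :=
  Matrix.of fun i j => fderiv ℝ (fun y => fderiv ℝ h y (Pi.single j 1)) z (Pi.single i 1)

/-! The density is jointly convex on `interior S × ℝⁿ`: `p ⬝ᵥ M(z)⁻¹ p` is the maximum over `q` of
`2 q ⬝ᵥ p - q ⬝ᵥ M(z) q`, and each of these functions is convex in `(z, p)` because `M` is concave.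
Its lower semicontinuous envelope `φ` is then convex as well. Convolution with a bump function
turns weak* convergence into pointwise convergence, where Fatou's lemma applies, and by Jensen's
inequality it does not increase `∫ φ`. A second application of Fatou's lemma removes the
mollification of the limit. -/

section LscEnvelope

open scoped NNReal

variable {X β : Type*} [TopologicalSpace X] [CompleteLinearOrder β]

/-- The lower semicontinuous envelope of the function equal to `f` on `D` and to `⊤` off `D`.
Off the closure of `D` the filter `𝓝[D] x` is trivial and the `liminf` takes the value `⊤`. -/
def lscEnvelope (D : Set X) (f : X → β) (x : X) : β := liminf f (𝓝[D] x)

lemma lowerSemicontinuous_lscEnvelope (D : Set X) (f : X → β) :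
    LowerSemicontinuous (lscEnvelope D f) := by
  intro x y hy
  rw [lscEnvelope, liminf_eq] at hy
  obtain ⟨a, ha, hya⟩ := lt_sSup_iff.1 hy
  filter_upwards [eventually_nhds_nhdsWithin.2 ha] with x' hx'
  exact hya.trans_le (le_liminf_of_le (by isBoundedDefault) hx')

lemma convexOn_lscEnvelope {E : Type*} [AddCommMonoid E] [Module ℝ≥0 E] [TopologicalSpace E]
    [ContinuousAdd E] [ContinuousConstSMul ℝ≥0 E] {D : Set E} {f : E → ℝ≥0∞}
    (hf : ConvexOn ℝ≥0 D f) : ConvexOn ℝ≥0 univ (lscEnvelope D f) := by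
  refine convexOn_iff_forall_pos.2 ⟨convex_univ, fun x _ y _ a b ha hb hab => ?_⟩
  obtain hx | hx := (𝓝[D] x).eq_or_neBot
  · simp [lscEnvelope, hx, ENNReal.smul_top, ha.ne']
  obtain hy | hy := (𝓝[D] y).eq_or_neBot
  · simp [lscEnvelope, hy, ENNReal.smul_top, hb.ne']
  have exists_ultrafilter (z : E) [(𝓝[D] z).NeBot] :
      ∃ U : Ultrafilter E, U ≤ 𝓝[D] z ∧ Tendsto f U (𝓝 (lscEnvelope D f z)) :=
    mapClusterPt_iff_ultrafilter.1 (isLeast_mapClusterPt_liminf (f := 𝓝[D] z) (u := f)).1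
  obtain ⟨U, hUx, hU⟩ := exists_ultrafilter x
  obtain ⟨V, hVy, hV⟩ := exists_ultrafilter y
  have hUV : (U ×ˢ V : Filter (E × E)) ≤ 𝓝[D] x ×ˢ 𝓝[D] y := prod_mono hUx hVy
  have hD : ∀ᶠ p in (U ×ˢ V : Filter (E × E)), p.1 ∈ D ∧ p.2 ∈ D :=
    hUV (prod_mem_prod self_mem_nhdsWithin self_mem_nhdsWithin)
  have hcomb : Tendsto (fun p : E × E => a • p.1 + b • p.2) (U ×ˢ V) (𝓝[D] (a • x + b • y)) := by
    refine tendsto_nhdsWithin_iff.2 ⟨?_, hD.mono fun p hp => hf.1 hp.1 hp.2 ha.le hb.le hab⟩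
    have hnhds : (U ×ˢ V : Filter (E × E)) ≤ 𝓝 (x, y) := by
      rw [nhds_prod_eq]
      exact hUV.trans (prod_mono nhdsWithin_le_nhds nhdsWithin_le_nhds)
    have hcont : Continuous fun p : E × E => a • p.1 + b • p.2 := by fun_prop
    exact (hcont.tendsto (x, y)).mono_left hnhds
  have hlim : Tendsto (fun p : E × E => a • f p.1 + b • f p.2) (U ×ˢ V)
      (𝓝 (a • lscEnvelope D f x + b • lscEnvelope D f y)) :=
    (ENNReal.Tendsto.const_mul (hU.comp tendsto_fst) (.inr ENNReal.coe_ne_top)).add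
      (ENNReal.Tendsto.const_mul (hV.comp tendsto_snd) (.inr ENNReal.coe_ne_top))
  calc lscEnvelope D f (a • x + b • y)
      ≤ liminf (fun p : E × E => f (a • p.1 + b • p.2)) (U ×ˢ V) :=
        liminf_le_liminf_of_le hcomb
    _ ≤ liminf (fun p : E × E => a • f p.1 + b • f p.2) (U ×ˢ V) :=
        liminf_le_liminf (hD.mono fun p hp => hf.2 hp.1 hp.2 ha.le hb.le hab)
    _ = a • lscEnvelope D f x + b • lscEnvelope D f y := hlim.liminf_eq

end LscEnvelope

section Jensen

open scoped NNReal

lemma convexOn_ennreal_ofReal {E : Type*} [AddCommGroup E] [Module ℝ E] {s : Set E} {g : E → ℝ}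
    (hg : ConvexOn ℝ s g) : ConvexOn ℝ≥0 s fun x => ENNReal.ofReal (g x) := by
  refine ⟨fun x hx y hy a b _ _ hab => hg.1 hx hy a.2 b.2 (mod_cast hab),
    fun x hx y hy a b _ _ hab => ?_⟩
  calc ENNReal.ofReal (g (a • x + b • y))
      ≤ ENNReal.ofReal (a * g x + b * g y) :=
        ENNReal.ofReal_le_ofReal (hg.2 hx hy a.2 b.2 (mod_cast hab))
    _ ≤ ENNReal.ofReal (a * g x) + ENNReal.ofReal (b * g y) := ENNReal.ofReal_add_le
    _ = a • ENNReal.ofReal (g x) + b • ENNReal.ofReal (g y) := by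
        simp only [ENNReal.ofReal_mul a.coe_nonneg, ENNReal.ofReal_mul b.coe_nonneg,
          ENNReal.ofReal_coe_nnreal, ENNReal.smul_def, smul_eq_mul]

lemma isClosed_epigraph_ofReal {X : Type*} [TopologicalSpace X] {F : X → ℝ≥0∞}
    (hF : LowerSemicontinuous F) :
    IsClosed {p : X × ℝ | 0 ≤ p.2 ∧ F p.1 ≤ ENNReal.ofReal p.2} :=
  (isClosed_le continuous_const continuous_snd).inter
    (hF.isClosed_epigraph.preimage
      (continuous_fst.prodMk (ENNReal.continuous_ofReal.comp continuous_snd)))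

lemma convex_epigraph_ofReal {E : Type*} [AddCommGroup E] [Module ℝ E] {F : E → ℝ≥0∞}
    (hF : ConvexOn ℝ≥0 univ F) :
    Convex ℝ {p : E × ℝ | 0 ≤ p.2 ∧ F p.1 ≤ ENNReal.ofReal p.2} := by
  rintro ⟨x, r⟩ ⟨hr, hxr⟩ ⟨y, s⟩ ⟨hs, hys⟩ a b ha hb hab
  lift a to ℝ≥0 using ha
  lift b to ℝ≥0 using hb
  lift r to ℝ≥0 using hr
  lift s to ℝ≥0 using hs
  refine ⟨(a * r + b * s).2, ?_⟩
  calc F (a • x + b • y) ≤ a • F x + b • F y :=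
        hF.2 (mem_univ x) (mem_univ y) a.2 b.2 (mod_cast hab)
    _ ≤ a • ENNReal.ofReal r + b • ENNReal.ofReal s := by gcongr
    _ = ENNReal.ofReal (a * r + b * s) := by
      simp only [ENNReal.smul_def, smul_eq_mul, ENNReal.ofReal_coe_nnreal]
      exact mod_cast (ENNReal.ofReal_coe_nnreal (p := a * r + b * s)).symm

variable {E Ω : Type*} [NormedAddCommGroup E] [NormedSpace ℝ E] [CompleteSpace E]
  [MeasurableSpace E] [BorelSpace E] [MeasurableSpace Ω] {P : Measure Ω} [IsProbabilityMeasure P]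

lemma map_integral_le_lintegral {F : E → ℝ≥0∞} (hFlsc : LowerSemicontinuous F)
    (hFconv : ConvexOn ℝ≥0 univ F) {u : Ω → E} (hu : Integrable u P) :
    F (∫ ω, u ω ∂P) ≤ ∫⁻ ω, F (u ω) ∂P := by
  obtain htop | hfin := eq_or_ne (∫⁻ ω, F (u ω) ∂P) ⊤
  · simp only [htop, le_top]
  have hmeas : AEMeasurable (fun ω => F (u ω)) P :=
    hFlsc.measurable.comp_aemeasurable hu.aestronglyMeasurable.aemeasurable
  have hint : Integrable (fun ω => (F (u ω)).toReal) P :=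
    integrable_toReal_of_lintegral_ne_top hmeas hfin
  have hlt : ∀ᵐ ω ∂P, F (u ω) < ⊤ := ae_lt_top' hmeas hfin
  have hmem : ∫ ω, (u ω, (F (u ω)).toReal) ∂P
      ∈ {p : E × ℝ | 0 ≤ p.2 ∧ F p.1 ≤ ENNReal.ofReal p.2} :=
    (convex_epigraph_ofReal hFconv).integral_mem (isClosed_epigraph_ofReal hFlsc)
      (hlt.mono fun ω hω => ⟨ENNReal.toReal_nonneg, (ENNReal.ofReal_toReal hω.ne).ge⟩)
      (hu.prodMk hint)
  rw [integral_pair hu hint, integral_toReal hmeas hlt] at hmem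
  simpa only [ENNReal.ofReal_toReal hfin] using hmem.2

end Jensen

section Fatou

variable {Ω E ι : Type*} [MeasurableSpace Ω] {ν : Measure Ω}
  [TopologicalSpace E] [MeasurableSpace E] [OpensMeasurableSpace E] {F : E → ℝ≥0∞}
  {l : Filter ι} [l.IsCountablyGenerated]

lemma lintegral_comp_le_liminf_of_ae_tendsto (hF : LowerSemicontinuous F)
    {u : ι → Ω → E} {v : Ω → E} (hu : ∀ i, AEMeasurable (u i) ν)
    (hlim : ∀ᵐ ω ∂ν, Tendsto (fun i => u i ω) l (𝓝 (v ω))) :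
    ∫⁻ ω, F (v ω) ∂ν ≤ liminf (fun i => ∫⁻ ω, F (u i ω) ∂ν) l :=
  calc ∫⁻ ω, F (v ω) ∂ν
      ≤ ∫⁻ ω, liminf (fun i => F (u i ω)) l ∂ν :=
        lintegral_mono_ae (hlim.mono fun ω hω =>
          (hF.le_liminf (v ω)).trans (liminf_le_liminf_of_le hω))
    _ ≤ liminf (fun i => ∫⁻ ω, F (u i ω) ∂ν) l :=
        lintegral_liminf_le' fun i => hF.measurable.comp_aemeasurable (hu i)

end Fatou

section Mollification

open ContinuousLinearMap
open scoped NNReal Convolution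

variable {G E : Type*} [NormedAddCommGroup G] [MeasurableSpace G] [BorelSpace G]
  [NormedAddCommGroup E] [NormedSpace ℝ E]

lemma lintegral_comp_translate_average_le {G : Type*} [AddGroup G] [MeasurableSpace G]
    [MeasurableAdd₂ G] [MeasurableNeg G] [CompleteSpace E] [MeasurableSpace E] [BorelSpace E]
    {ν : Measure G} [SFinite ν] [ν.IsAddRightInvariant] {P : Measure G} [IsProbabilityMeasure P]
    {F : E → ℝ≥0∞}
    (hFlsc : LowerSemicontinuous F) (hFconv : ConvexOn ℝ≥0 univ F) {u : G → E}
    (hu : AEStronglyMeasurable u ν) (huP : ∀ x, Integrable (fun t => u (x - t)) P) :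
    ∫⁻ x, F (∫ t, u (x - t) ∂P) ∂ν ≤ ∫⁻ x, F (u x) ∂ν := by
  have hmeas : AEMeasurable (fun p : G × G => F (u (p.1 - p.2))) (ν.prod P) :=
    (hFlsc.measurable.comp_aemeasurable hu.aemeasurable).comp_quasiMeasurePreserving
      (quasiMeasurePreserving_sub_of_right_invariant ν P)
  calc ∫⁻ x, F (∫ t, u (x - t) ∂P) ∂ν
      ≤ ∫⁻ x, ∫⁻ t, F (u (x - t)) ∂P ∂ν :=
        lintegral_mono fun x => map_integral_le_lintegral hFlsc hFconv (huP x)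
    _ = ∫⁻ t, ∫⁻ x, F (u (x - t)) ∂ν ∂P :=
        lintegral_lintegral_swap (f := fun x t => F (u (x - t))) hmeas
    _ = ∫⁻ _, ∫⁻ x, F (u x) ∂ν ∂P :=
        lintegral_congr (lintegral_sub_right_eq_self fun x => F (u x))
    _ = ∫⁻ x, F (u x) ∂ν := by simp only [lintegral_const, measure_univ, mul_one]

variable [NormedSpace ℝ G] [FiniteDimensional ℝ G] (ν : Measure G)
  (η : ContDiffBump (0 : G)) {u : G → E}

/-- The convolution of `u` with the bump function `η`, normalized to have integral one. -/
def mollify (u : G → E) : G → E := η.normed ν ⋆[lsmul ℝ ℝ, ν] u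

/-- The probability measure with density the normalized bump function `η`; mollifying by `η` is
averaging translates with respect to it. -/
def bumpMeasure : Measure G := ν.withDensity fun t => ENNReal.ofReal (η.normed ν t)

lemma mollify_eq_integral (u : G → E) (x : G) :
    mollify ν η u x = ∫ t, u (x - t) ∂(bumpMeasure ν η) := by
  rw [bumpMeasure, integral_withDensity_eq_integral_toReal_smul
    η.continuous_normed.measurable.ennreal_ofReal (ae_of_all _ fun _ => ENNReal.ofReal_lt_top)]
  simp only [ENNReal.toReal_ofReal (η.nonneg_normed _)]
  rfl

variable [ν.IsAddHaarMeasure]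

instance isProbabilityMeasure_bumpMeasure : IsProbabilityMeasure (bumpMeasure ν η) := by
  refine ⟨?_⟩
  rw [bumpMeasure, withDensity_apply _ MeasurableSet.univ, Measure.restrict_univ,
    ← ofReal_integral_eq_lintegral_ofReal η.integrable_normed (ae_of_all _ η.nonneg_normed),
    η.integral_normed, ENNReal.ofReal_one]

lemma integrable_translate_bumpMeasure (hu : LocallyIntegrable u ν) (x : G) :
    Integrable (fun t => u (x - t)) (bumpMeasure ν η) := by
  rw [bumpMeasure, integrable_withDensity_iff_integrable_smul'
    η.continuous_normed.measurable.ennreal_ofReal (ae_of_all _ fun _ => ENNReal.ofReal_lt_top)]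
  simp only [ENNReal.toReal_ofReal (η.nonneg_normed _)]
  exact η.hasCompactSupport_normed.convolutionExists_left (lsmul ℝ ℝ) η.continuous_normed hu x

lemma continuous_mollify (hu : LocallyIntegrable u ν) : Continuous (mollify ν η u) :=
  η.hasCompactSupport_normed.continuous_convolution_left (lsmul ℝ ℝ) η.continuous_normed hu

lemma exists_seq_bump_ae_tendsto_mollify [CompleteSpace E] (hu : LocallyIntegrable u ν) :
    ∃ η : ℕ → ContDiffBump (0 : G),
      ∀ᵐ x ∂ν, Tendsto (fun m => mollify ν (η m) u x) atTop (𝓝 (u x)) := by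
  let η (m : ℕ) : ContDiffBump (0 : G) :=
    { rIn := 1 / ((m : ℝ) + 1)
      rOut := 2 * (1 / ((m : ℝ) + 1))
      rIn_pos := by positivity
      rIn_lt_rOut := lt_two_mul_self (by positivity) }
  have hη : Tendsto (fun m => (η m).rOut) atTop (𝓝 0) := by
    simpa only [mul_zero] using (tendsto_one_div_add_atTop_nhds_zero_nat (𝕜 := ℝ)).const_mul 2
  exact ⟨η, ContDiffBump.ae_convolution_tendsto_right_of_locallyIntegrable hη
    (Eventually.of_forall fun m => le_rfl) hu⟩

lemma lintegral_comp_mollify_le [CompleteSpace E] [MeasurableSpace E] [BorelSpace E]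
    {F : E → ℝ≥0∞} (hFlsc : LowerSemicontinuous F) (hFconv : ConvexOn ℝ≥0 univ F)
    (hu : LocallyIntegrable u ν) :
    ∫⁻ x, F (mollify ν η u x) ∂ν ≤ ∫⁻ x, F (u x) ∂ν := by
  simp only [mollify_eq_integral]
  exact lintegral_comp_translate_average_le hFlsc hFconv hu.aestronglyMeasurable
    (integrable_translate_bumpMeasure ν η hu)

end Mollification

section WeakStar

open scoped NNReal

variable {X E E' ι : Type*} [TopologicalSpace X] [MeasurableSpace X] {ν : Measure X}
  {l : Filter ι} [NormedAddCommGroup E] [NormedAddCommGroup E']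

lemma locallyIntegrable_prodMk {u : X → E} {u' : X → E'} (hu : LocallyIntegrable u ν)
    (hu' : LocallyIntegrable u' ν) : LocallyIntegrable (fun x => (u x, u' x)) ν := by
  intro x
  obtain ⟨s, hs, hus⟩ := hu x
  obtain ⟨t, ht, hut⟩ := hu' x
  exact ⟨s ∩ t, inter_mem hs ht,
    (hus.mono_set inter_subset_left).prodMk (hut.mono_set inter_subset_right)⟩

variable [NormedSpace ℝ E] [NormedSpace ℝ E']

/-- Weak* convergence of vector fields, tested against real-valued functions in `C⁰_c`. -/
def TendstoWeakStar (ν : Measure X) (u : ι → X → E) (l : Filter ι) (v : X → E) : Prop :=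
  ∀ χ : X → ℝ, Continuous χ → HasCompactSupport χ →
    Tendsto (fun i => ∫ x, χ x • u i x ∂ν) l (𝓝 (∫ x, χ x • v x ∂ν))

lemma TendstoWeakStar.prodMk [T2Space X] [OpensMeasurableSpace X] [CompleteSpace E]
    [CompleteSpace E'] {u : ι → X → E} {v : X → E} {u' : ι → X → E'} {v' : X → E'}
    (h : TendstoWeakStar ν u l v) (h' : TendstoWeakStar ν u' l v')
    (hu : ∀ i, LocallyIntegrable (u i) ν) (hu' : ∀ i, LocallyIntegrable (u' i) ν)
    (hv : LocallyIntegrable v ν) (hv' : LocallyIntegrable v' ν) :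
    TendstoWeakStar ν (fun i x => (u i x, u' i x)) l (fun x => (v x, v' x)) := by
  intro χ hχ hχc
  have integral_smul_prod {f : X → E} {g : X → E'} (hf : LocallyIntegrable f ν)
      (hg : LocallyIntegrable g ν) :
      ∫ x, χ x • (f x, g x) ∂ν = (∫ x, χ x • f x ∂ν, ∫ x, χ x • g x ∂ν) :=
    integral_pair (hf.integrable_smul_left_of_hasCompactSupport hχ hχc)
      (hg.integrable_smul_left_of_hasCompactSupport hχ hχc)
  simp only [integral_smul_prod (hu _) (hu' _), integral_smul_prod hv hv']
  exact (h χ hχ hχc).prodMk_nhds (h' χ hχ hχc)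

variable {G : Type*} [NormedAddCommGroup G] [NormedSpace ℝ G] [FiniteDimensional ℝ G]
  [MeasurableSpace G] [BorelSpace G] {ν : Measure G} [ν.IsAddHaarMeasure]
  {u : ι → G → E} {v : G → E}

lemma TendstoWeakStar.tendsto_mollify (h : TendstoWeakStar ν u l v)
    (η : ContDiffBump (0 : G)) (x : G) :
    Tendsto (fun i => mollify ν η (u i) x) l (𝓝 (mollify ν η v x)) := by
  simp only [mollify, convolution_lsmul_swap]
  exact h (fun t => η.normed ν (x - t))
    (η.continuous_normed.comp (continuous_const.sub continuous_id))
    (η.hasCompactSupport_normed.comp_homeomorph (Homeomorph.subLeft x))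

theorem TendstoWeakStar.lintegral_comp_le_liminf [CompleteSpace E] [MeasurableSpace E]
    [BorelSpace E] [l.IsCountablyGenerated] {F : E → ℝ≥0∞} (hFlsc : LowerSemicontinuous F)
    (hFconv : ConvexOn ℝ≥0 univ F) (h : TendstoWeakStar ν u l v)
    (hu : ∀ i, LocallyIntegrable (u i) ν) (hv : LocallyIntegrable v ν) :
    ∫⁻ x, F (v x) ∂ν ≤ liminf (fun i => ∫⁻ x, F (u i x) ∂ν) l := by
  have hmoll (η : ContDiffBump (0 : G)) :
      ∫⁻ x, F (mollify ν η v x) ∂ν ≤ liminf (fun i => ∫⁻ x, F (u i x) ∂ν) l :=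
    calc ∫⁻ x, F (mollify ν η v x) ∂ν
        ≤ liminf (fun i => ∫⁻ x, F (mollify ν η (u i) x) ∂ν) l :=
          lintegral_comp_le_liminf_of_ae_tendsto hFlsc
            (fun i => (continuous_mollify ν η (hu i)).measurable.aemeasurable)
            (ae_of_all _ (h.tendsto_mollify η))
      _ ≤ liminf (fun i => ∫⁻ x, F (u i x) ∂ν) l :=
          liminf_le_liminf (Eventually.of_forall fun i =>
            lintegral_comp_mollify_le ν η hFlsc hFconv (hu i))
  obtain ⟨η, hη⟩ := exists_seq_bump_ae_tendsto_mollify ν hv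
  calc ∫⁻ x, F (v x) ∂ν
      ≤ liminf (fun m => ∫⁻ x, F (mollify ν (η m) v x) ∂ν) atTop :=
        lintegral_comp_le_liminf_of_ae_tendsto hFlsc
          (fun m => (continuous_mollify ν (η m) hv).measurable.aemeasurable) hη
    _ ≤ liminf (fun i => ∫⁻ x, F (u i x) ∂ν) l :=
        liminf_le_of_frequently_le' (Frequently.of_forall fun m => hmoll (η m))

end WeakStar

section SecondDerivativeTest

variable {E : Type*}

lemma concaveOn_of_comp_lineMap [AddCommGroup E] [Module ℝ E] {U : Set E} (hU : Convex ℝ U)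
    {g : E → ℝ} (hg : ∀ x ∈ U, ∀ y ∈ U,
      ConcaveOn ℝ (AffineMap.lineMap (k := ℝ) x y ⁻¹' U) (g ∘ AffineMap.lineMap (k := ℝ) x y)) :
    ConcaveOn ℝ U g := by
  refine ⟨hU, fun x hx y hy a b ha hb hab => ?_⟩
  obtain rfl : a = 1 - b := eq_sub_of_add_eq hab
  simpa [AffineMap.lineMap_apply_module] using
    (hg x hx y hy).2 (x := 0) (y := 1) (by simpa using hx) (by simpa using hy) ha hb hab

variable [NormedAddCommGroup E] [NormedSpace ℝ E]

lemma concaveOn_of_iteratedDeriv_two_line_nonpos {U : Set E} (hUo : IsOpen U) (hU : Convex ℝ U)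
    {g : E → ℝ} (hg : ContDiffOn ℝ 2 g U)
    (hg'' : ∀ z ∈ U, ∀ ζ, iteratedDeriv 2 (fun t : ℝ => g (z + t • ζ)) 0 ≤ 0) :
    ConcaveOn ℝ U g := by
  refine concaveOn_of_comp_lineMap hU fun x _ y _ => ?_
  set γ : ℝ →ᵃ[ℝ] E := AffineMap.lineMap x y
  have hγ : ContDiff ℝ 2 γ := ContDiff.lineMap contDiff_const contDiff_const contDiff_id
  have hDo : IsOpen (γ ⁻¹' U) := hUo.preimage hγ.continuous
  have hgγ : ContDiffOn ℝ 2 (g ∘ γ) (γ ⁻¹' U) := hg.comp hγ.contDiffOn fun s hs => hs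
  have hgγ' : ContDiffOn ℝ 1 (deriv (g ∘ γ)) (γ ⁻¹' U) :=
    hgγ.deriv_of_isOpen hDo (by norm_num)
  refine concaveOn_of_deriv2_nonpos' (hU.affine_preimage γ) (hgγ.differentiableOn two_ne_zero)
    (hgγ'.differentiableOn one_ne_zero) fun s hs => ?_
  have hline (t : ℝ) : γ s + t • (y - x) = γ (s + t) := by
    simp only [γ, AffineMap.lineMap_apply_module']
    module
  have h := hg'' (γ s) hs (y - x)
  simp only [hline] at h
  rw [← iteratedDeriv_eq_iterate]
  simpa using (congrFun (iteratedDeriv_comp_const_add 2 (g ∘ γ) s) 0).symm.trans_le h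

end SecondDerivativeTest

section QuadraticForm

variable {ι : Type*} [Fintype ι]

lemma contDiffOn_quadForm {E : Type*} [NormedAddCommGroup E] [NormedSpace ℝ E] {k : WithTop ℕ∞}
    {U : Set E} {M : E → Matrix ι ι ℝ} (hM : ∀ i j, ContDiffOn ℝ k (fun z => M z i j) U)
    (q : ι → ℝ) : ContDiffOn ℝ k (fun z => q ⬝ᵥ (M z *ᵥ q)) U :=
  ContDiffOn.sum fun i _ => contDiffOn_const.mul <| ContDiffOn.sum fun j _ =>
    (hM i j).mul contDiffOn_const

lemma iteratedDeriv_quadForm {k : ℕ} {N : ℝ → Matrix ι ι ℝ} {t : ℝ}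
    (hN : ∀ i j, ContDiffAt ℝ k (fun s => N s i j) t) (q : ι → ℝ) :
    iteratedDeriv k (fun s => q ⬝ᵥ (N s *ᵥ q)) t =
      q ⬝ᵥ (Matrix.of (fun i j => iteratedDeriv k (fun s => N s i j) t) *ᵥ q) := by
  simp only [dotProduct, mulVec, of_apply]
  rw [iteratedDeriv_fun_sum fun i _ => contDiffAt_const.mul <| ContDiffAt.sum fun j _ =>
    (hN i j).mul contDiffAt_const]
  refine Finset.sum_congr rfl fun i _ => ?_
  rw [iteratedDeriv_const_mul_field, iteratedDeriv_fun_sum fun j _ =>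
    (hN i j).mul contDiffAt_const]
  simp only [mul_comm _ (q _), iteratedDeriv_const_mul_field]

variable [DecidableEq ι] {A : Matrix ι ι ℝ}

lemma mulVec_inv_mulVec (hA : IsUnit A) (p : ι → ℝ) : A *ᵥ (A⁻¹ *ᵥ p) = p := by
  rw [mulVec_mulVec, mul_nonsing_inv _ ((isUnit_iff_isUnit_det A).1 hA), one_mulVec]

lemma two_mul_dotProduct_sub_quadForm_inv (hA : IsUnit A) (p : ι → ℝ) :
    2 * ((A⁻¹ *ᵥ p) ⬝ᵥ p) - (A⁻¹ *ᵥ p) ⬝ᵥ (A *ᵥ (A⁻¹ *ᵥ p)) = p ⬝ᵥ (A⁻¹ *ᵥ p) := by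
  rw [mulVec_inv_mulVec hA, dotProduct_comm p]
  ring

lemma two_mul_dotProduct_sub_quadForm_le (hA : A.PosDef) (p q : ι → ℝ) :
    2 * (q ⬝ᵥ p) - q ⬝ᵥ (A *ᵥ q) ≤ p ⬝ᵥ (A⁻¹ *ᵥ p) := by
  set r := A⁻¹ *ᵥ p
  have hAr : A *ᵥ r = p := mulVec_inv_mulVec hA.isUnit p
  have hsymm : r ⬝ᵥ (A *ᵥ q) = q ⬝ᵥ p := by
    rw [dotProduct_mulVec, ← mulVec_transpose, ← conjTranspose_eq_transpose_of_trivial, hA.1.eq,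
      hAr, dotProduct_comm]
  have hsq : 0 ≤ (q - r) ⬝ᵥ (A *ᵥ (q - r)) := hA.posSemidef.dotProduct_mulVec_nonneg (q - r)
  rw [mulVec_sub, hAr, sub_dotProduct, dotProduct_sub, dotProduct_sub, hsymm,
    dotProduct_comm r p] at hsq
  linarith

lemma convexOn_quadForm_inv {E : Type*} [AddCommGroup E] [Module ℝ E] {U : Set E}
    {M : E → Matrix ι ι ℝ} (hpos : ∀ z ∈ U, (M z).PosDef)
    (hconc : ∀ q : ι → ℝ, ConcaveOn ℝ U fun z => q ⬝ᵥ (M z *ᵥ q)) :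
    ConvexOn ℝ (Prod.fst ⁻¹' U) fun y : E × (ι → ℝ) => y.2 ⬝ᵥ ((M y.1)⁻¹ *ᵥ y.2) := by
  have hU : Convex ℝ U := (hconc 0).1
  refine ⟨hU.linear_preimage (LinearMap.fst ℝ E (ι → ℝ)), ?_⟩
  rintro ⟨z, p⟩ hz ⟨z', p'⟩ hz' a b ha hb hab
  simp only [mem_preimage] at hz hz'
  set q := (M (a • z + b • z'))⁻¹ *ᵥ (a • p + b • p')
  have hmax : (a • p + b • p') ⬝ᵥ q =
      2 * (q ⬝ᵥ (a • p + b • p')) - q ⬝ᵥ (M (a • z + b • z') *ᵥ q) :=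
    (two_mul_dotProduct_sub_quadForm_inv (hpos _ (hU hz hz' ha hb hab)).isUnit _).symm
  have hMq : a * (q ⬝ᵥ (M z *ᵥ q)) + b * (q ⬝ᵥ (M z' *ᵥ q)) ≤ q ⬝ᵥ (M (a • z + b • z') *ᵥ q) :=
    (hconc q).2 hz hz' ha hb hab
  calc (a • p + b • p') ⬝ᵥ q
      ≤ a * (2 * (q ⬝ᵥ p) - q ⬝ᵥ (M z *ᵥ q)) + b * (2 * (q ⬝ᵥ p') - q ⬝ᵥ (M z' *ᵥ q)) := by
        rw [hmax, dotProduct_add, dotProduct_smul, dotProduct_smul, smul_eq_mul, smul_eq_mul]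
        linarith
    _ ≤ a * (p ⬝ᵥ ((M z)⁻¹ *ᵥ p)) + b * (p' ⬝ᵥ ((M z')⁻¹ *ᵥ p')) := by
        gcongr
        · exact two_mul_dotProduct_sub_quadForm_le (hpos z hz) p q
        · exact two_mul_dotProduct_sub_quadForm_le (hpos z' hz') p' q

end QuadraticForm

section Mobility

open scoped NNReal

variable {n : ℕ} {S : Set (Fin n → ℝ)} {M : (Fin n → ℝ) → Matrix (Fin n) (Fin n) ℝ}

lemma matDirDeriv2_self (M : (Fin n → ℝ) → Matrix (Fin n) (Fin n) ℝ) (z ζ : Fin n → ℝ) :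
    matDirDeriv2 M z ζ ζ =
      Matrix.of fun i j => iteratedDeriv 2 (fun t : ℝ => M (z + t • ζ) i j) 0 := by
  ext i j
  have hline (s t : ℝ) : z + t • ζ + s • ζ = z + (s + t) • ζ := by module
  simp only [matDirDeriv2, of_apply, hline, iteratedDeriv_succ, iteratedDeriv_zero]
  congr 1
  funext s
  simpa using deriv_comp_const_add (f := fun r : ℝ => M (z + r • ζ) i j) s 0

lemma IsMobility.concaveOn_quadForm (hM : IsMobility S M) (hS : Convex ℝ S) (q : Fin n → ℝ) :
    ConcaveOn ℝ (interior S) fun z => q ⬝ᵥ (M z *ᵥ q) := by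
  have hM₂ (i j : Fin n) : ContDiffOn ℝ 2 (fun z => M z i j) (interior S) :=
    contDiffOn_infty.1 (hM.smooth i j) 2
  refine concaveOn_of_iteratedDeriv_two_line_nonpos isOpen_interior hS.interior
    (contDiffOn_quadForm hM₂ q) fun z hz ζ => ?_
  have hline (i j : Fin n) : ContDiffAt ℝ 2 (fun t : ℝ => M (z + t • ζ) i j) 0 := by
    have hMz : ContDiffAt ℝ 2 (fun z => M z i j) (z + (0 : ℝ) • ζ) := by
      simpa using (hM₂ i j).contDiffAt (isOpen_interior.mem_nhds hz)
    exact hMz.comp (f := fun t : ℝ => z + t • ζ) 0 (by fun_prop)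
  rw [iteratedDeriv_quadForm hline, ← matDirDeriv2_self]
  simpa [neg_mulVec] using (hM.concave z hz ζ).dotProduct_mulVec_nonneg q

lemma MemM.locallyIntegrable (hS : Bornology.IsBounded S) {μ : ℝ → Fin n → ℝ} (hμ : MemM S μ) :
    LocallyIntegrable μ := by
  obtain ⟨C, hC⟩ := hS.exists_norm_le
  exact (memLp_top_of_bound hμ.1.aestronglyMeasurable C
    (ae_of_all _ fun x => hC _ (hμ.2 x))).locallyIntegrable le_top

lemma WeakStarTendsto.tendstoWeakStar {μk : ℕ → ℝ → Fin n → ℝ} {μ : ℝ → Fin n → ℝ}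
    (h : WeakStarTendsto μk μ) (hμk : ∀ k, LocallyIntegrable (μk k)) (hμ : LocallyIntegrable μ) :
    TendstoWeakStar volume μk atTop μ := by
  intro χ hχ hχc
  have integral_apply {f : ℝ → Fin n → ℝ} (hf : LocallyIntegrable f) (i : Fin n) :
      (∫ x, χ x • f x) i = ∫ x, f x ⬝ᵥ Pi.single i (χ x) := by
    have hint : Integrable fun x => χ x • f x := hf.integrable_smul_left_of_hasCompactSupport hχ hχc
    rw [eval_integral fun j => hint.eval j]
    simp only [Pi.smul_apply, smul_eq_mul, dotProduct_single, mul_comm]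
  refine tendsto_pi_nhds.2 fun i => ?_
  simp only [integral_apply (hμk _), integral_apply hμ]
  exact h _ ((continuous_single i).comp hχ) (hχc.comp_left (g := Pi.single i) (Pi.single_zero i))

lemma lowerSemicontinuous_actDensLsc (M : (Fin n → ℝ) → Matrix (Fin n) (Fin n) ℝ)
    (S : Set (Fin n → ℝ)) :
    LowerSemicontinuous fun y : (Fin n → ℝ) × (Fin n → ℝ) => actDensLsc M S y.1 y.2 :=
  lowerSemicontinuous_lscEnvelope (Prod.fst ⁻¹' interior S) _

lemma convexOn_actDensLsc (hpos : ∀ z ∈ interior S, (M z).PosDef)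
    (hconc : ∀ q : Fin n → ℝ, ConcaveOn ℝ (interior S) fun z => q ⬝ᵥ (M z *ᵥ q)) :
    ConvexOn ℝ≥0 univ fun y : (Fin n → ℝ) × (Fin n → ℝ) => actDensLsc M S y.1 y.2 :=
  convexOn_lscEnvelope (convexOn_ennreal_ofReal (convexOn_quadForm_inv hpos hconc))

theorem action_lsc_weakstar_general (hpos : ∀ z ∈ interior S, (M z).PosDef)
    (hconc : ∀ q : Fin n → ℝ, ConcaveOn ℝ (interior S) fun z => q ⬝ᵥ (M z *ᵥ q))
    {μk wk : ℕ → ℝ → Fin n → ℝ} {μ w : ℝ → Fin n → ℝ}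
    (hμk : ∀ k, LocallyIntegrable (μk k)) (hμ : LocallyIntegrable μ)
    (hwk : ∀ k, LocallyIntegrable (wk k)) (hw : LocallyIntegrable w)
    (hμconv : WeakStarTendsto μk μ) (hwconv : WeakStarTendsto wk w) :
    action M S μ w ≤ liminf (fun k => action M S (μk k) (wk k)) atTop :=
  TendstoWeakStar.lintegral_comp_le_liminf
    (F := fun y : (Fin n → ℝ) × (Fin n → ℝ) => actDensLsc M S y.1 y.2)
    (u := fun k x => (μk k x, wk k x)) (v := fun x => (μ x, w x))
    (lowerSemicontinuous_actDensLsc M S)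
    (convexOn_actDensLsc hpos hconc)
    ((hμconv.tendstoWeakStar hμk hμ).prodMk (hwconv.tendstoWeakStar hwk hw) hμk hwk hμ hw)
    (fun k => locallyIntegrable_prodMk (hμk k) (hwk k)) (locallyIntegrable_prodMk hμ hw)

end Mobility

/-- lower semicontinuity of the action functional under weak* convergence. -/
theorem action_lsc_weakstar {n : ℕ} (hn : 1 ≤ n)
    (S : Set (Fin n → ℝ)) (hSconv : Convex ℝ S) (hScomp : IsCompact S)
    (hSint : (interior S).Nonempty)
    (M : (Fin n → ℝ) → Matrix (Fin n) (Fin n) ℝ) (hM : IsMobility S M)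
    (μk : ℕ → ℝ → Fin n → ℝ) (μ : ℝ → Fin n → ℝ)
    (hμk : ∀ k, MemM S (μk k)) (hμ : MemM S μ)
    (wk : ℕ → ℝ → Fin n → ℝ) (w : ℝ → Fin n → ℝ)
    (hwkmeas : ∀ k, Measurable (wk k))
    (hwkloc : ∀ k, LocallyIntegrable (wk k) (volume : Measure ℝ))
    (hwmeas : Measurable w) (hwloc : LocallyIntegrable w (volume : Measure ℝ))
    (hμconv : WeakStarTendsto μk μ)
    (hwconv : ∀ ρ : ℝ → Fin n → ℝ, Continuous ρ → HasCompactSupport ρ →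
      Tendsto (fun k => ∫ x : ℝ, wk k x ⬝ᵥ ρ x) atTop (𝓝 (∫ x : ℝ, w x ⬝ᵥ ρ x))) :
    action M S μ w ≤ Filter.liminf (fun k => action M S (μk k) (wk k)) atTop :=
  action_lsc_weakstar_general hM.posDef (hM.concaveOn_quadForm hSconv)
    (fun k => (hμk k).locallyIntegrable hScomp.isBounded)
    (hμ.locallyIntegrable hScomp.isBounded) hwkloc hwloc hμconv hwconv

end
end

section
/- For ε > 0 define h_ε : (0,1)² → ℝ by h_ε(z) = z₁ log z₁ + (1−z₁) log(1−z₁) + z₂ log z₂ + (1−z₂) log(1−z₂) + ε z₁ z₂ (1−z₁)(1−z₂). There exists ε₀ > 0 such that for every ε ∈ (0, ε₀]: (i) the Hessian ∇²h_ε(z) is positive definite (in particular det ∇²h_ε(z) > 0) for every z ∈ (0,1)²; (ii) M_ε(z) := (∇²h_ε(z))⁻¹ extends continuously to S = [0,1]² by setting M_ε(z) = diag(z₁(1−z₁), z₂(1−z₂)) for z ∈ ∂S; (iii) M_ε satisfies the strengthened concavity condition (C2'): for every z ∈ (0,1)² and all ζ, β ∈ ℝ²\{0}, βᵀ D²M_ε(z)[ζ,ζ]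 β < 0. In particular M_ε satisfies conditions (C0)–(C3) and (C2'). -/
open MeasureTheory Filter Topology Set Matrix
open scoped ENNReal

noncomputable section

/-- Scalar logistic entropy s ↦ s log s + (1−s) log(1−s). -/
def logEntropy (s : ℝ) : ℝ := s * Real.log s + (1 - s) * Real.log (1 - s)

/-- The perturbed entropy h_ε on (0,1)². -/
def hPert (ε : ℝ) (z : Fin 2 → ℝ) : ℝ :=
  logEntropy (z 0) + logEntropy (z 1) + ε * (z 0 * z 1 * (1 - z 0) * (1 - z 1))

/-!
Let `p(s) = s (1 - s)` and `P = diag(p(x), p(y))`. The Hessian of `hPert ε` is `P⁻¹ + ε R` with `R`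
smooth on the closed square, so its inverse is `M = P - ε P R P + ε² P (⋯) P`, which is smooth up to
the boundary and equals `P` there. For the form `⟨β, D²M[ζ,ζ] β⟩` the leading term `P` only gives
`-2 ((ζ₀β₀)² + (ζ₁β₁)²)`, which degenerates when `ζ` and `β` are orthogonal coordinate directions.
The missing concavity comes from the diagonal entries `2ε p(x)² p(y)` and `2ε p(y)² p(x)` of
`-ε P R P`, which contribute `-4ε ((p(x) ζ₁β₀)² + (p(y) ζ₀β₁)²)`. Since `P` stands on both sides of
the remaining terms, these are bounded by the same squares, with a gain of `ε` or after a weighted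
Young inequality, and are absorbed for small `ε`.
-/

/-- `HasTwoJetAt f a b c t₀` says that `f` has value `a`, first derivative `b` and second derivative
`c` at `t₀`. Differentiability of `f` near `t₀` is part of the notion, so that `c` is never a junk
value of `deriv`. -/
def HasTwoJetAt (f : ℝ → ℝ) (a b c t₀ : ℝ) : Prop :=
  ∃ f' : ℝ → ℝ, (∀ᶠ t in 𝓝 t₀, HasDerivAt f (f' t) t) ∧ f t₀ = a ∧ f' t₀ = b ∧ HasDerivAt f' c t₀

namespace HasTwoJetAt

variable {f g : ℝ → ℝ} {a b c a' b' c' t₀ : ℝ}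

lemma deriv_deriv (hf : HasTwoJetAt f a b c t₀) : deriv (deriv f) t₀ = c := by
  obtain ⟨f', hf, -, -, hf'⟩ := hf
  have : deriv f =ᶠ[𝓝 t₀] f' := hf.mono fun _ ht => ht.deriv
  rw [this.deriv_eq, hf'.deriv]

lemma congr_of_eventuallyEq (hf : HasTwoJetAt f a b c t₀) (hgf : g =ᶠ[𝓝 t₀] f) :
    HasTwoJetAt g a b c t₀ := by
  obtain ⟨f', hf, ha, hb, hf'⟩ := hf
  refine ⟨f', ?_, hgf.eq_of_nhds.trans ha, hb, hf'⟩
  filter_upwards [hf, hgf.eventuallyEq_nhds] with t ht htg using ht.congr_of_eventuallyEq htg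

lemma const (k t₀ : ℝ) : HasTwoJetAt (fun _ => k) k 0 0 t₀ :=
  ⟨fun _ => 0, .of_forall fun t => hasDerivAt_const t k, rfl, rfl, hasDerivAt_const t₀ 0⟩

lemma add (hf : HasTwoJetAt f a b c t₀) (hg : HasTwoJetAt g a' b' c' t₀) :
    HasTwoJetAt (fun t => f t + g t) (a + a') (b + b') (c + c') t₀ := by
  obtain ⟨f', hf, rfl, rfl, hf'⟩ := hf
  obtain ⟨g', hg, rfl, rfl, hg'⟩ := hg
  refine ⟨fun t => f' t + g' t, ?_, rfl, rfl, hf'.add hg'⟩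
  filter_upwards [hf, hg] with t hft hgt using hft.add hgt

lemma mul (hf : HasTwoJetAt f a b c t₀) (hg : HasTwoJetAt g a' b' c' t₀) :
    HasTwoJetAt (fun t => f t * g t) (a * a') (b * a' + a * b') (c * a' + 2 * b * b' + a * c')
      t₀ := by
  obtain ⟨f', hf, rfl, rfl, hf'⟩ := hf
  obtain ⟨g', hg, rfl, rfl, hg'⟩ := hg
  refine ⟨fun t => f' t * g t + f t * g' t, ?_, rfl, rfl, ?_⟩
  · filter_upwards [hf, hg] with t hft hgt using hft.mul hgt
  · refine ((hf'.mul hg.self_of_nhds).add (hf.self_of_nhds.mul hg')).congr_deriv ?_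
    ring

lemma const_mul (k : ℝ) (hf : HasTwoJetAt f a b c t₀) :
    HasTwoJetAt (fun t => k * f t) (k * a) (k * b) (k * c) t₀ := by
  simpa using (const k t₀).mul hf

lemma comp_line {E : Type*} [NormedAddCommGroup E] [NormedSpace ℝ E] {G : E → ℝ} {w : E}
    (hG : ContDiffAt ℝ 2 G w) (v : E) :
    HasTwoJetAt (fun t : ℝ => G (w + t • v)) (G w) (fderiv ℝ G w v)
      (fderiv ℝ (fderiv ℝ G) w v v) 0 := by
  have hline (t : ℝ) : HasDerivAt (fun t : ℝ => w + t • v) v t := by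
    simpa using ((hasDerivAt_id t).smul_const v).const_add w
  have hw : w + (0 : ℝ) • v = w := by simp
  have htendsto : Tendsto (fun t : ℝ => w + t • v) (𝓝 0) (𝓝 w) := by
    simpa using (hline 0).continuousAt.tendsto
  have hG' : HasFDerivAt (fderiv ℝ G) (fderiv ℝ (fderiv ℝ G) w) (w + (0 : ℝ) • v) := by
    rw [hw]
    exact ((hG.fderiv_right (m := 1) (by norm_num)).differentiableAt (by norm_num)).hasFDerivAt
  refine ⟨fun t => fderiv ℝ G (w + t • v) v, ?_, by simp, by simp, ?_⟩
  · filter_upwards [htendsto.eventually (hG.eventually (by simp))] with t ht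
    exact (ht.differentiableAt (by norm_num)).hasFDerivAt.comp_hasDerivAt t (hline t)
  · exact (ContinuousLinearMap.apply ℝ ℝ v).hasFDerivAt.comp_hasDerivAt 0
      (hG'.comp_hasDerivAt 0 (hline 0))

end HasTwoJetAt

lemma exists_twoJet_bound_of_isCompact {E : Type*} [NormedAddCommGroup E] [NormedSpace ℝ E]
    {G : E → ℝ} {K : Set E} (hK : IsCompact K) (hG : ∀ w ∈ K, ContDiffAt ℝ 2 G w) :
    ∃ C : ℝ, 0 ≤ C ∧ ∀ w ∈ K, |G w| ≤ C ∧ ∀ v : E, ∃ b c : ℝ, |b| ≤ C * ‖v‖ ∧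
      |c| ≤ C * ‖v‖ ^ 2 ∧ HasTwoJetAt (fun t : ℝ => G (w + t • v)) (G w) b c 0 := by
  have hcont : ContinuousOn (fun w => (G w, fderiv ℝ G w, fderiv ℝ (fderiv ℝ G) w)) K := by
    intro w hw
    have hG₁ : ContDiffAt ℝ 1 (fderiv ℝ G) w := (hG w hw).fderiv_right (by norm_num)
    have hG₂ : ContDiffAt ℝ 0 (fderiv ℝ (fderiv ℝ G)) w := hG₁.fderiv_right (by norm_num)
    exact ((hG w hw).continuousAt.prodMk
      (hG₁.continuousAt.prodMk hG₂.continuousAt)).continuousWithinAt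
  obtain ⟨C, hC⟩ := hK.exists_bound_of_continuousOn
    (f := fun w => (G w, fderiv ℝ G w, fderiv ℝ (fderiv ℝ G) w)) hcont
  refine ⟨|C|, abs_nonneg C, fun w hw => ?_⟩
  have hbound := (hC w hw).trans (le_abs_self C)
  simp only [norm_prod_le_iff] at hbound
  obtain ⟨hG₀, hG₁, hG₂⟩ := hbound
  refine ⟨hG₀, fun v => ⟨_, _, (fderiv ℝ G w).le_of_opNorm_le hG₁ v, ?_,
    HasTwoJetAt.comp_line (hG w hw) v⟩⟩
  calc |fderiv ℝ (fderiv ℝ G) w v v| ≤ ‖fderiv ℝ (fderiv ℝ G) w v‖ * ‖v‖ :=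
        (fderiv ℝ (fderiv ℝ G) w v).le_opNorm v
    _ ≤ |C| * ‖v‖ * ‖v‖ := by
        gcongr
        exact (fderiv ℝ (fderiv ℝ G) w).le_of_opNorm_le hG₂ v
    _ = |C| * ‖v‖ ^ 2 := by ring

lemma exists_twoJet_bound_plane {E : Type*} [NormedAddCommGroup E] [NormedSpace ℝ E]
    {G : E × ℝ × ℝ → ℝ} {K : Set (E × ℝ × ℝ)} (hK : IsCompact K)
    (hG : ∀ w ∈ K, ContDiffAt ℝ 2 G w) :
    ∃ C : ℝ, 0 ≤ C ∧ ∀ e x y, (e, x, y) ∈ K → |G (e, x, y)| ≤ C ∧ ∀ v₁ v₂ : ℝ, ∃ b c : ℝ,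
      |b| ≤ C * (|v₁| + |v₂|) ∧ |c| ≤ C * (|v₁| + |v₂|) ^ 2 ∧
      HasTwoJetAt (fun t => G (e, x + t * v₁, y + t * v₂)) (G (e, x, y)) b c 0 := by
  obtain ⟨C, hC, hbound⟩ := exists_twoJet_bound_of_isCompact hK hG
  refine ⟨C, hC, fun e x y hw => ⟨(hbound _ hw).1, fun v₁ v₂ => ?_⟩⟩
  obtain ⟨b, c, hb, hc, hjet⟩ := (hbound _ hw).2 ((0 : E), v₁, v₂)
  have hnorm : ‖((0 : E), v₁, v₂)‖ ≤ |v₁| + |v₂| := by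
    simp [Prod.norm_def]
  refine ⟨b, c, hb.trans (by gcongr), hc.trans (by gcongr), ?_⟩
  simpa using hjet

section MatrixDerivatives

variable {n : ℕ} {M : (Fin n → ℝ) → Matrix (Fin n) (Fin n) ℝ}

lemma matDirDeriv2_apply_of_hasTwoJetAt {z ζ : Fin n → ℝ} {i j : Fin n} {a b c : ℝ}
    (h : HasTwoJetAt (fun t => M (z + t • ζ) i j) a b c 0) : matDirDeriv2 M z ζ ζ i j = c := by
  have hshift (s : ℝ) : deriv (fun t : ℝ => M (z + t • ζ + s • ζ) i j) 0 =
      deriv (fun t : ℝ => M (z + t • ζ) i j) s := by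
    have := deriv_comp_add_const (fun t : ℝ => M (z + t • ζ) i j) s 0
    simpa only [zero_add, add_smul, ← add_assoc] using this
  simp only [matDirDeriv2, Matrix.of_apply, hshift]
  exact h.deriv_deriv

lemma matDirDeriv2_zero (z : Fin n → ℝ) : matDirDeriv2 M z 0 0 = 0 := by
  ext i j
  simp [matDirDeriv2]

lemma isSymm_matDirDeriv2 (hM : ∀ z, (M z).IsSymm) (z ζ ζ' : Fin n → ℝ) :
    (matDirDeriv2 M z ζ ζ').IsSymm := by
  ext i j
  simp [matDirDeriv2, (hM _).apply i j]

lemma posDef_neg_matDirDeriv2 (hM : ∀ z, (M z).IsSymm) {z ζ : Fin n → ℝ}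
    (h : ∀ β, β ≠ 0 → β ⬝ᵥ (matDirDeriv2 M z ζ ζ *ᵥ β) < 0) :
    (-matDirDeriv2 M z ζ ζ).PosDef := by
  refine .of_dotProduct_mulVec_pos ?_ fun β hβ => ?_
  · rw [Matrix.IsHermitian, Matrix.conjTranspose_eq_transpose_of_trivial]
    exact (isSymm_matDirDeriv2 hM z ζ ζ).neg
  · simpa [Matrix.neg_mulVec] using h β hβ

lemma hess_apply_of_hasFDerivAt {h g : (Fin n → ℝ) → ℝ} {g' : (Fin n → ℝ) →L[ℝ] ℝ}
    {z : Fin n → ℝ} {j : Fin n} (hg : ∀ᶠ y in 𝓝 z, fderiv ℝ h y (Pi.single j 1) = g y)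
    (hg' : HasFDerivAt g g' z) (i : Fin n) : hess h z i j = g' (Pi.single i 1) := by
  have : (fun y => fderiv ℝ h y (Pi.single j 1)) =ᶠ[𝓝 z] g := hg
  rw [hess, Matrix.of_apply, this.fderiv_eq, hg'.fderiv]

lemma hasFDerivAt_comp_apply {f : ℝ → ℝ} {f' : ℝ} {z : Fin n → ℝ} {k : Fin n}
    (hf : HasDerivAt f f' (z k)) :
    HasFDerivAt (fun y : Fin n → ℝ => f (y k))
      (f' • ContinuousLinearMap.proj (R := ℝ) (φ := fun _ : Fin n => ℝ) k) z :=
  hf.comp_hasFDerivAt z (hasFDerivAt_apply k z)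

end MatrixDerivatives

lemma dotProduct_mulVec_fin_two (A : Matrix (Fin 2) (Fin 2) ℝ) (β : Fin 2 → ℝ) :
    β ⬝ᵥ (A *ᵥ β) = β 0 ^ 2 * A 0 0 + β 0 * β 1 * (A 0 1 + A 1 0) + β 1 ^ 2 * A 1 1 := by
  simp only [dotProduct, Matrix.mulVec, Fin.sum_univ_two]
  ring

lemma posDef_fin_two_of_pos {a b d : ℝ} (ha : 0 < a) (hdet : 0 < a * d - b ^ 2) :
    (!![a, b; b, d] : Matrix (Fin 2) (Fin 2) ℝ).PosDef := by
  refine .of_dotProduct_mulVec_pos (by ext i j; fin_cases i <;> fin_cases j <;> rfl) fun v hv => ?_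
  have hsquare : a * (star v ⬝ᵥ !![a, b; b, d] *ᵥ v) =
      (a * v 0 + b * v 1) ^ 2 + (a * d - b ^ 2) * v 1 ^ 2 := by
    rw [star_trivial, dotProduct_mulVec_fin_two]
    simp only [Matrix.of_apply, Matrix.cons_val]
    ring
  refine pos_of_mul_pos_right ?_ ha.le
  rw [hsquare]
  rcases eq_or_ne (v 1) 0 with h₁ | h₁
  · have h₀ : v 0 ≠ 0 := fun h₀ => hv (by ext i; fin_cases i <;> simp [h₀, h₁])
    have : a * v 0 + b * v 1 ≠ 0 := by simp [h₁, h₀, ha.ne']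
    positivity
  · positivity

section UnitCube

/-- The cube `[0,1]ⁿ`, the domain `S` of the mobility. -/
def unitCube (n : ℕ) : Set (Fin n → ℝ) := {z | ∀ j, z j ∈ Icc (0 : ℝ) 1}

variable {n : ℕ} {z : Fin n → ℝ}

lemma unitCube_eq_pi (n : ℕ) : unitCube n = univ.pi fun _ => Icc (0 : ℝ) 1 := by
  ext z
  exact mem_univ_pi.symm

lemma interior_unitCube (n : ℕ) : interior (unitCube n) = {z | ∀ j, z j ∈ Ioo (0 : ℝ) 1} := by
  rw [unitCube_eq_pi, interior_pi_set finite_univ]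
  ext z
  simp

lemma isClosed_unitCube (n : ℕ) : IsClosed (unitCube n) := by
  rw [unitCube_eq_pi]
  exact isClosed_set_pi fun _ _ => isClosed_Icc

lemma mul_one_sub_mul_normal_eq_zero {ν : Fin n → ℝ} (hz : z ∈ unitCube n)
    (hν : ∀ y ∈ unitCube n, ν ⬝ᵥ (y - z) ≤ 0) (j : Fin n) : z j * (1 - z j) * ν j = 0 := by
  have hcoord : ∀ s ∈ Icc (0 : ℝ) 1, ν j * (s - z j) ≤ 0 := fun s hs => by
    have hmem : Function.update z j s ∈ unitCube n := by
      intro k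
      rcases eq_or_ne k j with rfl | hk
      · simpa using hs
      · simpa [hk] using hz k
    have hsingle : Function.update z j s - z = Pi.single j (s - z j) := by
      ext k
      rcases eq_or_ne k j with rfl | hk <;> simp [*]
    simpa [hsingle] using hν _ hmem
  have h₀ := hcoord 0 (by simp)
  have h₁ := hcoord 1 (by simp)
  obtain ⟨hz₀, hz₁⟩ := hz j
  apply le_antisymm
  · nlinarith [mul_le_mul_of_nonneg_left h₁ hz₀]
  · nlinarith [mul_le_mul_of_nonneg_left h₀ (sub_nonneg.2 hz₁)]

lemma mobC3_unitCube_of_eq_diagonal {M : (Fin n → ℝ) → Matrix (Fin n) (Fin n) ℝ}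
    (hM : ∀ z ∈ unitCube n, ¬ (∀ j, z j ∈ Ioo (0 : ℝ) 1) →
      M z = Matrix.diagonal fun j => z j * (1 - z j)) : MobC3 (unitCube n) M := by
  intro z hz ν hν
  rw [(isClosed_unitCube n).frontier_eq, interior_unitCube] at hz
  rw [hM z hz.1 hz.2]
  ext j
  rw [Matrix.mulVec_diagonal]
  exact mul_one_sub_mul_normal_eq_zero hz.1 hν j

end UnitCube

/-- The scalar logistic mobility `p(s) = s (1 - s)`, whose derivative is `1 - 2s`. -/
def logisticMob (s : ℝ) : ℝ := s * (1 - s)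

lemma logisticMob_pos {s : ℝ} (hs : s ∈ Ioo (0 : ℝ) 1) : 0 < logisticMob s :=
  mul_pos hs.1 (sub_pos.2 hs.2)

lemma logisticMob_nonneg {s : ℝ} (hs : s ∈ Icc (0 : ℝ) 1) : 0 ≤ logisticMob s :=
  mul_nonneg hs.1 (sub_nonneg.2 hs.2)

lemma logisticMob_eq_zero {s : ℝ} (hs : s ∈ Icc (0 : ℝ) 1) (hs' : s ∉ Ioo (0 : ℝ) 1) :
    logisticMob s = 0 := by
  rcases hs.1.eq_or_lt with rfl | h₀
  · simp [logisticMob]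
  · rw [hs.2.eq_of_not_lt fun h₁ => hs' ⟨h₀, h₁⟩, logisticMob, sub_self, mul_zero]

lemma logisticMob_le_quarter (s : ℝ) : logisticMob s ≤ 1 / 4 := by
  rw [logisticMob]
  nlinarith [sq_nonneg (1 - 2 * s)]

lemma logisticMob_mem_Icc {s : ℝ} (hs : s ∈ Icc (0 : ℝ) 1) :
    logisticMob s ∈ Icc (0 : ℝ) (1 / 4) :=
  ⟨logisticMob_nonneg hs, logisticMob_le_quarter s⟩

lemma one_sub_two_mul_sq (s : ℝ) : (1 - 2 * s) ^ 2 = 1 - 4 * logisticMob s := by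
  rw [logisticMob]
  ring

lemma abs_one_sub_two_mul_le_one {s : ℝ} (hs : s ∈ Icc (0 : ℝ) 1) : |1 - 2 * s| ≤ 1 :=
  abs_le.2 ⟨by linarith [hs.2], by linarith [hs.1]⟩

lemma hasDerivAt_one_sub_two_mul (s : ℝ) : HasDerivAt (fun s : ℝ => 1 - 2 * s) (-2) s := by
  simpa using ((hasDerivAt_id s).const_mul 2).const_sub 1

lemma hasDerivAt_logisticMob (s : ℝ) : HasDerivAt logisticMob (1 - 2 * s) s := by
  refine ((hasDerivAt_id' s).mul ((hasDerivAt_id' s).const_sub 1)).congr_deriv ?_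
  ring

lemma contDiff_logisticMob {n : WithTop ℕ∞} : ContDiff ℝ n logisticMob := by
  unfold logisticMob
  fun_prop

lemma hasTwoJetAt_logisticMob (x v : ℝ) :
    HasTwoJetAt (fun t => logisticMob (x + t * v)) (logisticMob x) ((1 - 2 * x) * v) (-2 * v ^ 2)
      0 := by
  have hline (t : ℝ) : HasDerivAt (fun t : ℝ => x + t * v) v t := by
    simpa using ((hasDerivAt_id t).mul_const v).const_add x
  refine ⟨fun t => (1 - 2 * (x + t * v)) * v, .of_forall fun t => ?_, by simp, by simp, ?_⟩
  · exact (hasDerivAt_logisticMob _).comp t (hline t)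
  · refine (((hasDerivAt_one_sub_two_mul _).comp 0 (hline 0)).mul_const v).congr_deriv ?_
    ring

lemma hasTwoJetAt_logisticMob_mul_self (x v : ℝ) :
    HasTwoJetAt (fun t => logisticMob (x + t * v) * logisticMob (x + t * v))
      (logisticMob x * logisticMob x) (2 * (1 - 2 * x) * logisticMob x * v)
      (2 * (1 - 6 * logisticMob x) * v ^ 2) 0 := by
  convert (hasTwoJetAt_logisticMob x v).mul (hasTwoJetAt_logisticMob x v) using 1
  · ring
  · linear_combination -2 * v ^ 2 * one_sub_two_mul_sq x

/-- The factor `1 - 2ε p(x) p(y)`; the diagonal entries of the Hessian of `hPert ε` are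
`mobFactor ε x y / p(x)` and `mobFactor ε x y / p(y)`. -/
def mobFactor (ε x y : ℝ) : ℝ := 1 - 2 * ε * (logisticMob x * logisticMob y)

/-- The determinant of the Hessian of `hPert ε`, multiplied by `p(x) p(y)` so that it stays regular
on the boundary of the square. -/
def mobDet (ε x y : ℝ) : ℝ :=
  mobFactor ε x y ^ 2 -
    ε ^ 2 * (logisticMob x * logisticMob y) * ((1 - 2 * x) * (1 - 2 * y)) ^ 2

/-- The first diagonal entry of the inverse Hessian of `hPert ε`; the second one is obtained by
exchanging `x` and `y`. -/
def mobDiag (ε x y : ℝ) : ℝ := logisticMob x * mobFactor ε x y / mobDet ε x y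

/-- The off-diagonal entry of the inverse Hessian of `hPert ε`. -/
def mobOff (ε x y : ℝ) : ℝ :=
  -(ε * (logisticMob x * logisticMob y) * ((1 - 2 * x) * (1 - 2 * y))) / mobDet ε x y

/-- The perturbed mobility `M_ε`: the adjugate formula for the inverse Hessian of `hPert ε`, which
makes sense on the closed square. -/
def mob (ε : ℝ) (z : Fin 2 → ℝ) : Matrix (Fin 2) (Fin 2) ℝ :=
  !![mobDiag ε (z 0) (z 1), mobOff ε (z 0) (z 1); mobOff ε (z 0) (z 1), mobDiag ε (z 1) (z 0)]

/-- The compact range `ε, x, y ∈ [0,1]` on which the remainders of the expansion in `ε` are bounded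
uniformly. -/
def paramBox : Set (ℝ × ℝ × ℝ) := Icc 0 1 ×ˢ Icc 0 1 ×ˢ Icc 0 1

lemma mem_paramBox {ε x y : ℝ} : (ε, x, y) ∈ paramBox ↔
    ε ∈ Icc (0 : ℝ) 1 ∧ x ∈ Icc (0 : ℝ) 1 ∧ y ∈ Icc (0 : ℝ) 1 :=
  Iff.rfl

lemma isCompact_paramBox : IsCompact paramBox :=
  isCompact_Icc.prod (isCompact_Icc.prod isCompact_Icc)

section MobEntries

variable {ε x y : ℝ}

lemma mobFactor_swap (ε x y : ℝ) : mobFactor ε y x = mobFactor ε x y := by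
  simp only [mobFactor, mul_comm (logisticMob y)]

lemma mobDet_swap (ε x y : ℝ) : mobDet ε y x = mobDet ε x y := by
  simp only [mobDet, mobFactor_swap ε x y, mul_comm (logisticMob y), mul_comm (1 - 2 * y)]

lemma logisticMob_mul_mem_Icc (hx : x ∈ Icc (0 : ℝ) 1) (hy : y ∈ Icc (0 : ℝ) 1) :
    logisticMob x * logisticMob y ∈ Icc (0 : ℝ) (1 / 16) := by
  have hp := logisticMob_nonneg hx
  have hq := logisticMob_nonneg hy
  refine ⟨mul_nonneg hp hq, ?_⟩
  calc logisticMob x * logisticMob y ≤ 1 / 4 * (1 / 4) := by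
        gcongr <;> exact logisticMob_le_quarter _
    _ = 1 / 16 := by norm_num

lemma seven_eighths_le_mobFactor (h : (ε, x, y) ∈ paramBox) : 7 / 8 ≤ mobFactor ε x y := by
  obtain ⟨hε, hx, hy⟩ := mem_paramBox.1 h
  have hr := logisticMob_mul_mem_Icc hx hy
  rw [mobFactor]
  nlinarith [mul_nonneg (sub_nonneg.2 hε.2) hr.1, hr.2]

lemma mobFactor_pos (h : (ε, x, y) ∈ paramBox) : 0 < mobFactor ε x y :=
  (by norm_num : (0 : ℝ) < 7 / 8).trans_le (seven_eighths_le_mobFactor h)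

lemma mobDet_pos (h : (ε, x, y) ∈ paramBox) : 0 < mobDet ε x y := by
  have hm : (7 / 8 : ℝ) ^ 2 ≤ mobFactor ε x y ^ 2 := by
    gcongr
    exact seven_eighths_le_mobFactor h
  obtain ⟨hε, hx, hy⟩ := mem_paramBox.1 h
  have hr := logisticMob_mul_mem_Icc hx hy
  have hs : ((1 - 2 * x) * (1 - 2 * y)) ^ 2 ≤ 1 := by
    rw [sq_le_one_iff_abs_le_one, abs_mul]
    exact mul_le_one₀ (abs_one_sub_two_mul_le_one hx) (abs_nonneg _)
      (abs_one_sub_two_mul_le_one hy)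
  have hcross : ε ^ 2 * (logisticMob x * logisticMob y) * ((1 - 2 * x) * (1 - 2 * y)) ^ 2 ≤
      1 ^ 2 * (1 / 16) * 1 := by
    have := hr.1
    gcongr
    exacts [hε.1, hε.2, hr.2]
  rw [mobDet]
  linarith

lemma contDiff_mobFactor {n : WithTop ℕ∞} :
    ContDiff ℝ n fun w : ℝ × ℝ × ℝ => mobFactor w.1 w.2.1 w.2.2 := by
  simp only [mobFactor, logisticMob]
  fun_prop

lemma contDiff_mobDet {n : WithTop ℕ∞} :
    ContDiff ℝ n fun w : ℝ × ℝ × ℝ => mobDet w.1 w.2.1 w.2.2 := by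
  simp only [mobDet, mobFactor, logisticMob]
  fun_prop

end MobEntries

section Expansion

/-- The second-order remainder of the diagonal entry: `mobDiag` equals
`p(x) + 2ε p(x)² p(y) + ε² p(x)² mobDiagRem`. -/
def mobDiagRem (ε x y : ℝ) : ℝ :=
  logisticMob y * (4 * (logisticMob x * logisticMob y) +
    ((1 - 2 * x) * (1 - 2 * y)) ^ 2 / mobDet ε x y) / mobFactor ε x y

/-- The first-order remainder of the off-diagonal entry: `mobOff` equals
`ε p(x) p(y) mobOffRem`. -/
def mobOffRem (ε x y : ℝ) : ℝ := -((1 - 2 * x) * (1 - 2 * y)) / mobDet ε x y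

variable {ε x y : ℝ}

/- From `1 / m = 1 + 2εr + 4ε²r² / m` and `m / D = 1 / m + ε²rs / (mD)`, where `m`, `D` are the
factor and the determinant, `r = p(x) p(y)` and `s = (1 - 2x)²(1 - 2y)²`. -/
lemma mobDiag_eq_expansion (hm : mobFactor ε x y ≠ 0) (hD : mobDet ε x y ≠ 0) :
    mobDiag ε x y = logisticMob x +
      2 * ε * (logisticMob x * logisticMob x * logisticMob y) +
      ε ^ 2 * (logisticMob x * logisticMob x * mobDiagRem ε x y) := by
  have hinv : 1 / mobFactor ε x y = 1 + 2 * ε * (logisticMob x * logisticMob y) +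
      4 * ε ^ 2 * (logisticMob x * logisticMob y) ^ 2 / mobFactor ε x y := by
    field_simp
    rw [mobFactor]
    ring
  have hquot : mobFactor ε x y / mobDet ε x y = 1 / mobFactor ε x y +
      ε ^ 2 * (logisticMob x * logisticMob y) * ((1 - 2 * x) * (1 - 2 * y)) ^ 2 /
        (mobFactor ε x y * mobDet ε x y) := by
    field_simp
    rw [mobDet]
    ring
  rw [mobDiag, mul_div_assoc, hquot, hinv, mobDiagRem]
  field_simp
  ring

lemma mobOff_eq_expansion (ε x y : ℝ) :
    mobOff ε x y = ε * (logisticMob x * logisticMob y * mobOffRem ε x y) := by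
  rw [mobOff, mobOffRem]
  ring

lemma contDiffAt_mobDiagRem {n : WithTop ℕ∞} {w : ℝ × ℝ × ℝ} (hw : w ∈ paramBox) :
    ContDiffAt ℝ n (fun w : ℝ × ℝ × ℝ => mobDiagRem w.1 w.2.1 w.2.2) w := by
  have hD := (mobDet_pos hw).ne'
  have hm := (mobFactor_pos hw).ne'
  have hnum : ContDiffAt ℝ n
      (fun w : ℝ × ℝ × ℝ => ((1 - 2 * w.2.1) * (1 - 2 * w.2.2)) ^ 2) w := by fun_prop
  have hp : ContDiffAt ℝ n (fun w : ℝ × ℝ × ℝ => logisticMob w.2.1) w :=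
    contDiff_logisticMob.contDiffAt.comp w (by fun_prop)
  have hq : ContDiffAt ℝ n (fun w : ℝ × ℝ × ℝ => logisticMob w.2.2) w :=
    contDiff_logisticMob.contDiffAt.comp w (by fun_prop)
  exact (hq.mul ((contDiffAt_const.mul (hp.mul hq)).add
    (hnum.div contDiff_mobDet.contDiffAt hD))).div contDiff_mobFactor.contDiffAt hm

lemma contDiffAt_mobOffRem {n : WithTop ℕ∞} {w : ℝ × ℝ × ℝ} (hw : w ∈ paramBox) :
    ContDiffAt ℝ n (fun w : ℝ × ℝ × ℝ => mobOffRem w.1 w.2.1 w.2.2) w := by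
  have hnum : ContDiffAt ℝ n
      (fun w : ℝ × ℝ × ℝ => -((1 - 2 * w.2.1) * (1 - 2 * w.2.2))) w := by fun_prop
  exact hnum.div contDiff_mobDet.contDiffAt (mobDet_pos hw).ne'

lemma contDiffAt_mobDiag {n : WithTop ℕ∞} {w : ℝ × ℝ × ℝ} (hw : w ∈ paramBox) :
    ContDiffAt ℝ n (fun w : ℝ × ℝ × ℝ => mobDiag w.1 w.2.1 w.2.2) w := by
  have hp : ContDiffAt ℝ n (fun w : ℝ × ℝ × ℝ => logisticMob w.2.1) w :=
    contDiff_logisticMob.contDiffAt.comp w (by fun_prop)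
  exact (hp.mul contDiff_mobFactor.contDiffAt).div contDiff_mobDet.contDiffAt (mobDet_pos hw).ne'

lemma contDiffAt_mobOff {n : WithTop ℕ∞} {w : ℝ × ℝ × ℝ} (hw : w ∈ paramBox) :
    ContDiffAt ℝ n (fun w : ℝ × ℝ × ℝ => mobOff w.1 w.2.1 w.2.2) w := by
  have hnum : ContDiffAt ℝ n (fun w : ℝ × ℝ × ℝ =>
      -(w.1 * (logisticMob w.2.1 * logisticMob w.2.2) *
        ((1 - 2 * w.2.1) * (1 - 2 * w.2.2)))) w := by
    simp only [logisticMob]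
    fun_prop
  exact hnum.div contDiff_mobDet.contDiffAt (mobDet_pos hw).ne'

lemma eventually_mobDiag_eq_expansion (h : (ε, x, y) ∈ paramBox) (v₁ v₂ : ℝ) :
    (fun t => mobDiag ε (x + t * v₁) (y + t * v₂)) =ᶠ[𝓝 0] fun t => logisticMob (x + t * v₁) +
      2 * ε * (logisticMob (x + t * v₁) * logisticMob (x + t * v₁) * logisticMob (y + t * v₂)) +
      ε ^ 2 * (logisticMob (x + t * v₁) * logisticMob (x + t * v₁) *
        mobDiagRem ε (x + t * v₁) (y + t * v₂)) := by
  have hline : Continuous fun t : ℝ => (ε, x + t * v₁, y + t * v₂) := by fun_prop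
  have hm := ((contDiff_mobFactor (n := 0)).continuous.comp hline).continuousAt (x := 0)
  have hD := ((contDiff_mobDet (n := 0)).continuous.comp hline).continuousAt (x := 0)
  filter_upwards [hm.eventually_ne (by simpa using (mobFactor_pos h).ne'),
    hD.eventually_ne (by simpa using (mobDet_pos h).ne')] with t ht₁ ht₂
    using mobDiag_eq_expansion ht₁ ht₂

end Expansion

section Inequalities

variable {p q a b v₁ v₂ C g₀ g₁ g₂ : ℝ}

lemma secondDeriv_sq_mul_le (hp : p ∈ Icc (0 : ℝ) (1 / 4)) (hq : q ∈ Icc (0 : ℝ) (1 / 4))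
    (ha : |a| ≤ 1) (hb : |b| ≤ 1) :
    2 * (2 * (1 - 6 * p) * v₁ ^ 2 * q + 2 * (2 * a * p * v₁) * (b * v₂) +
      p * p * (-2 * v₂ ^ 2)) ≤ 17 * v₁ ^ 2 - 3 * (p * v₂) ^ 2 := by
  have hab : (a * b) ^ 2 ≤ 1 := by
    rw [sq_le_one_iff_abs_le_one, abs_mul]
    exact mul_le_one₀ ha (abs_nonneg _) hb
  have hfirst : 4 * ((1 - 6 * p) * q) * v₁ ^ 2 ≤ 1 * v₁ ^ 2 := by
    gcongr
    nlinarith [mul_nonneg hp.1 hq.1, hq.2]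
  have hcross : 8 * (a * b * v₁) * (p * v₂) ≤ 16 * v₁ ^ 2 + (p * v₂) ^ 2 := by
    nlinarith [sq_nonneg (4 * (a * b * v₁) - p * v₂), mul_le_mul_of_nonneg_right hab (sq_nonneg v₁)]
  linarith

lemma secondDeriv_sq_mul_rem_le (hp : p ∈ Icc (0 : ℝ) (1 / 4)) (ha : |a| ≤ 1) (hg₀ : |g₀| ≤ C)
    (hg₁ : |g₁| ≤ C * (|v₁| + |v₂|)) (hg₂ : |g₂| ≤ C * (|v₁| + |v₂|) ^ 2) :
    2 * (1 - 6 * p) * v₁ ^ 2 * g₀ + 2 * (2 * a * p * v₁) * g₁ + p * p * g₂ ≤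
      10 * C * (v₁ ^ 2 + (p * v₂) ^ 2) := by
  have hC : 0 ≤ C := (abs_nonneg _).trans hg₀
  have hp₀ := hp.1
  have hS : p * (|v₁| + |v₂|) ≤ |v₁| + p * |v₂| := by
    nlinarith [abs_nonneg v₁, hp.2]
  have hzero : 2 * (1 - 6 * p) * v₁ ^ 2 * g₀ ≤ 2 * C * v₁ ^ 2 := by
    have : (1 - 6 * p) * g₀ ≤ 1 * C := by
      refine (le_abs_self _).trans ?_
      rw [abs_mul]
      gcongr
      exact abs_le.2 ⟨by linarith [hp.2], by linarith⟩
    nlinarith [mul_le_mul_of_nonneg_right this (sq_nonneg v₁)]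
  have hone : 2 * (2 * a * p * v₁) * g₁ ≤ 4 * C * (|v₁| * (|v₁| + p * |v₂|)) := by
    calc 2 * (2 * a * p * v₁) * g₁ ≤ |2 * (2 * a * p * v₁) * g₁| := le_abs_self _
      _ = 4 * |a| * |v₁| * (p * |g₁|) := by
          simp only [abs_mul, abs_two, abs_of_nonneg hp₀]
          ring
      _ ≤ 4 * 1 * |v₁| * (p * (C * (|v₁| + |v₂|))) := by gcongr
      _ = 4 * C * (|v₁| * (p * (|v₁| + |v₂|))) := by ring
      _ ≤ 4 * C * (|v₁| * (|v₁| + p * |v₂|)) := by gcongr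
  have htwo : p * p * g₂ ≤ C * (|v₁| + p * |v₂|) ^ 2 := by
    calc p * p * g₂ ≤ p * p * (C * (|v₁| + |v₂|) ^ 2) := by
          gcongr
          exact (le_abs_self _).trans hg₂
      _ = C * (p * (|v₁| + |v₂|)) ^ 2 := by ring
      _ ≤ C * (|v₁| + p * |v₂|) ^ 2 := by gcongr
  have hsquares : 2 * v₁ ^ 2 + 4 * (|v₁| * (|v₁| + p * |v₂|)) + (|v₁| + p * |v₂|) ^ 2 ≤
      10 * (v₁ ^ 2 + (p * v₂) ^ 2) := by
    rw [← sq_abs v₁, mul_pow, ← sq_abs v₂]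
    nlinarith [sq_nonneg (|v₁| - p * |v₂|), sq_nonneg (p * |v₂|)]
  nlinarith [mul_le_mul_of_nonneg_left hsquares hC]

lemma abs_secondDeriv_mul_le (hp₀ : 0 ≤ p) (hq₀ : 0 ≤ q) (ha : |a| ≤ 1) (hb : |b| ≤ 1) :
    |-2 * v₁ ^ 2 * q + 2 * (a * v₁) * (b * v₂) + p * (-2 * v₂ ^ 2)| ≤
      2 * (q * v₁ ^ 2 + |v₁ * v₂| + p * v₂ ^ 2) := by
  have hab : |a| * |b| * (|v₁| * |v₂|) ≤ 1 * (|v₁| * |v₂|) := by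
    gcongr
    exact mul_le_one₀ ha (abs_nonneg _) hb
  refine (abs_add_three _ _ _).trans ?_
  rw [← sq_abs v₁, ← sq_abs v₂]
  simp only [abs_mul, abs_neg, abs_two, abs_pow, abs_abs, abs_of_nonneg hp₀, abs_of_nonneg hq₀]
  linarith

lemma abs_secondDeriv_mul_rem_le (hp : p ∈ Icc (0 : ℝ) (1 / 4)) (hq : q ∈ Icc (0 : ℝ) (1 / 4))
    (ha : |a| ≤ 1) (hb : |b| ≤ 1) (hg₀ : |g₀| ≤ C) (hg₁ : |g₁| ≤ C * (|v₁| + |v₂|))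
    (hg₂ : |g₂| ≤ C * (|v₁| + |v₂|) ^ 2) :
    |(-2 * v₁ ^ 2 * q + 2 * (a * v₁) * (b * v₂) + p * (-2 * v₂ ^ 2)) * g₀ +
      2 * (a * v₁ * q + p * (b * v₂)) * g₁ + p * q * g₂| ≤
      5 * C * (q * v₁ ^ 2 + |v₁ * v₂| + p * v₂ ^ 2) := by
  have hC : 0 ≤ C := (abs_nonneg _).trans hg₀
  have hp₀ := hp.1
  have hq₀ := hq.1
  have hv := mul_nonneg (abs_nonneg v₁) (abs_nonneg v₂)
  have hzero := abs_secondDeriv_mul_le (v₁ := v₁) (v₂ := v₂) hp₀ hq₀ ha hb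
  set A := -2 * v₁ ^ 2 * q + 2 * (a * v₁) * (b * v₂) + p * (-2 * v₂ ^ 2)
  set S := q * v₁ ^ 2 + |v₁ * v₂| + p * v₂ ^ 2 with hS
  rw [← sq_abs v₁, ← sq_abs v₂, abs_mul v₁ v₂] at hS
  have hone : |a * v₁ * q + p * (b * v₂)| * (|v₁| + |v₂|) ≤ S := by
    calc |a * v₁ * q + p * (b * v₂)| * (|v₁| + |v₂|)
        ≤ (1 * |v₁| * q + p * (1 * |v₂|)) * (|v₁| + |v₂|) := by
          gcongr
          refine (abs_add_le _ _).trans ?_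
          simp only [abs_mul, abs_of_nonneg hp₀, abs_of_nonneg hq₀]
          gcongr
      _ ≤ S := by nlinarith [hp.2, hq.2]
  have htwo : p * q * (|v₁| + |v₂|) ^ 2 ≤ S := by
    have hpq : p * q ≤ 1 / 4 * (1 / 4) := mul_le_mul hp.2 hq.2 hq₀ (by norm_num)
    have h₁ : p * q ≤ q := mul_le_of_le_one_left hq₀ (hp.2.trans (by norm_num))
    have h₂ : p * q ≤ p := mul_le_of_le_one_right hp₀ (hq.2.trans (by norm_num))
    nlinarith [mul_le_mul_of_nonneg_right h₁ (sq_nonneg |v₁|),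
      mul_le_mul_of_nonneg_right h₂ (sq_nonneg |v₂|), mul_le_mul_of_nonneg_right hpq hv]
  calc |A * g₀ + 2 * (a * v₁ * q + p * (b * v₂)) * g₁ + p * q * g₂|
      ≤ |A| * |g₀| + 2 * |a * v₁ * q + p * (b * v₂)| * |g₁| + p * q * |g₂| := by
        refine (abs_add_three _ _ _).trans_eq ?_
        simp only [abs_mul, abs_two, abs_of_nonneg hp₀, abs_of_nonneg hq₀]
    _ ≤ 2 * S * C + 2 * |a * v₁ * q + p * (b * v₂)| * (C * (|v₁| + |v₂|)) +
        p * q * (C * (|v₁| + |v₂|) ^ 2) := by gcongr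
    _ = C * (2 * S + 2 * (|a * v₁ * q + p * (b * v₂)| * (|v₁| + |v₂|)) +
        p * q * (|v₁| + |v₂|) ^ 2) := by ring
    _ ≤ C * (2 * S + 2 * S + S) := by gcongr
    _ = 5 * C * S := by ring

end Inequalities

lemma exists_mobDiag_twoJet : ∃ C : ℝ, 0 ≤ C ∧ ∀ ε x y, (ε, x, y) ∈ paramBox → ∀ v₁ v₂ : ℝ,
    ∃ b c : ℝ, c ≤ -(2 - ε * (17 + C)) * v₁ ^ 2 - (3 - ε * C) * ε * (logisticMob x * v₂) ^ 2 ∧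
      HasTwoJetAt (fun t => mobDiag ε (x + t * v₁) (y + t * v₂)) (mobDiag ε x y) b c 0 := by
  obtain ⟨C, hC, hrem⟩ := exists_twoJet_bound_plane isCompact_paramBox
    (G := fun w => mobDiagRem w.1 w.2.1 w.2.2) fun w hw => contDiffAt_mobDiagRem hw
  refine ⟨10 * C, by positivity, fun ε x y hbox v₁ v₂ => ?_⟩
  obtain ⟨hg₀, hjets⟩ := hrem ε x y hbox
  obtain ⟨g₁, g₂, hg₁, hg₂, hG⟩ := hjets v₁ v₂
  have hpp := hasTwoJetAt_logisticMob_mul_self x v₁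
  have hjet := (((hasTwoJetAt_logisticMob x v₁).add
    ((hpp.mul (hasTwoJetAt_logisticMob y v₂)).const_mul (2 * ε))).add
      ((hpp.mul hG).const_mul (ε ^ 2))).congr_of_eventuallyEq
        (eventually_mobDiag_eq_expansion hbox v₁ v₂)
  rw [← mobDiag_eq_expansion (mobFactor_pos hbox).ne' (mobDet_pos hbox).ne'] at hjet
  refine ⟨_, _, ?_, hjet⟩
  obtain ⟨hε, hx, hy⟩ := mem_paramBox.1 hbox
  have ha := abs_one_sub_two_mul_le_one hx
  have hmain := secondDeriv_sq_mul_le (v₁ := v₁) (v₂ := v₂) (logisticMob_mem_Icc hx)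
    (logisticMob_mem_Icc hy) ha (abs_one_sub_two_mul_le_one hy)
  have hsmall := secondDeriv_sq_mul_rem_le (logisticMob_mem_Icc hx) ha hg₀ hg₁ hg₂
  have hε₀ : 0 ≤ ε := hε.1
  have hε₂ : ε ^ 2 * (10 * C * v₁ ^ 2) ≤ ε * (10 * C * v₁ ^ 2) := by
    gcongr
    exact pow_le_of_le_one hε₀ hε.2 two_ne_zero
  linear_combination ε * hmain + ε ^ 2 * hsmall + hε₂

lemma exists_mobOff_twoJet : ∃ K : ℝ, 0 ≤ K ∧ ∀ ε x y, (ε, x, y) ∈ paramBox → ∀ v₁ v₂ : ℝ,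
    ∃ b c : ℝ,
      |c| ≤ ε * K * (logisticMob y * v₁ ^ 2 + |v₁ * v₂| + logisticMob x * v₂ ^ 2) ∧
      HasTwoJetAt (fun t => mobOff ε (x + t * v₁) (y + t * v₂)) (mobOff ε x y) b c 0 := by
  obtain ⟨C, hC, hrem⟩ := exists_twoJet_bound_plane isCompact_paramBox
    (G := fun w => mobOffRem w.1 w.2.1 w.2.2) fun w hw => contDiffAt_mobOffRem hw
  refine ⟨5 * C, by positivity, fun ε x y hbox v₁ v₂ => ?_⟩
  obtain ⟨hg₀, hjets⟩ := hrem ε x y hbox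
  obtain ⟨g₁, g₂, hg₁, hg₂, hG⟩ := hjets v₁ v₂
  obtain ⟨hε, hx, hy⟩ := mem_paramBox.1 hbox
  have hjet := (((hasTwoJetAt_logisticMob x v₁).mul
    (hasTwoJetAt_logisticMob y v₂)).mul hG).const_mul ε
  simp only [← mobOff_eq_expansion] at hjet
  refine ⟨_, _, ?_, hjet⟩
  rw [abs_mul, abs_of_nonneg hε.1, mul_assoc ε]
  exact mul_le_mul_of_nonneg_left (abs_secondDeriv_mul_rem_le (logisticMob_mem_Icc hx)
    (logisticMob_mem_Icc hy) (abs_one_sub_two_mul_le_one hx) (abs_one_sub_two_mul_le_one hy)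
    hg₀ hg₁ hg₂) hε.1

section StrengthenedConcavity

variable {ε : ℝ}

/-- In the variables `X = ζ₀β₀`, `Y = ζ₁β₁`, `U = p ζ₁β₀`, `V = q ζ₀β₁`, the form
`β ↦ ⟨β, D²M[ζ,ζ]β⟩` is bounded by the left-hand side. -/
lemma concavity_absorption {C K X Y U V : ℝ} (hε : 0 ≤ ε)
    (hε₀ : ε * (17 + C + K + K ^ 2) ≤ 1) (hK : 0 ≤ K) :
    (-(2 - ε * (17 + C)) * X ^ 2 - (3 - ε * C) * ε * U ^ 2) +
      2 * (ε * K * (|X * V| + |X * Y| + |Y * U|)) +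
      (-(2 - ε * (17 + C)) * Y ^ 2 - (3 - ε * C) * ε * V ^ 2) ≤
      -(X ^ 2 + Y ^ 2) - ε * (U ^ 2 + V ^ 2) := by
  have hXV : 2 * K * |X * V| ≤ K ^ 2 * X ^ 2 + V ^ 2 := by
    rw [abs_mul, ← sq_abs X, ← sq_abs V]
    linarith [sq_nonneg (K * |X| - |V|)]
  have hYU : 2 * K * |Y * U| ≤ K ^ 2 * Y ^ 2 + U ^ 2 := by
    rw [abs_mul, ← sq_abs Y, ← sq_abs U]
    linarith [sq_nonneg (K * |Y| - |U|)]
  have hXY : 2 * K * |X * Y| ≤ K * (X ^ 2 + Y ^ 2) := by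
    rw [abs_mul, ← sq_abs X, ← sq_abs Y]
    linarith [mul_nonneg hK (sq_nonneg (|X| - |Y|))]
  have hεC : ε * C ≤ 1 := by nlinarith [sq_nonneg K]
  linear_combination ε * hXV + ε * hYU + ε * hXY + (X ^ 2 + Y ^ 2) * hε₀ +
    ε * (U ^ 2 + V ^ 2) * hεC

lemma isSymm_mob (ε : ℝ) (z : Fin 2 → ℝ) : (mob ε z).IsSymm := by
  ext i j
  fin_cases i <;> fin_cases j <;> rfl

lemma exists_matDirDeriv2_mob_le : ∃ C K : ℝ, 0 ≤ C ∧ 0 ≤ K ∧ ∀ ε ∈ Icc (0 : ℝ) 1,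
    ∀ z ∈ unitCube 2, ∀ ζ β : Fin 2 → ℝ,
      β ⬝ᵥ (matDirDeriv2 (mob ε) z ζ ζ *ᵥ β) ≤
        (-(2 - ε * (17 + C)) * (ζ 0 * β 0) ^ 2 -
          (3 - ε * C) * ε * (logisticMob (z 0) * (ζ 1 * β 0)) ^ 2) +
        2 * (ε * K * (|ζ 0 * β 0 * (logisticMob (z 1) * (ζ 0 * β 1))| +
          |ζ 0 * β 0 * (ζ 1 * β 1)| + |ζ 1 * β 1 * (logisticMob (z 0) * (ζ 1 * β 0))|)) +
        (-(2 - ε * (17 + C)) * (ζ 1 * β 1) ^ 2 -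
          (3 - ε * C) * ε * (logisticMob (z 1) * (ζ 0 * β 1)) ^ 2) := by
  obtain ⟨C, hC, hdiag⟩ := exists_mobDiag_twoJet
  obtain ⟨K, hK, hoff⟩ := exists_mobOff_twoJet
  refine ⟨C, K, hC, hK, fun ε hε z hz ζ β => ?_⟩
  obtain ⟨_, c₀₀, hc₀₀, hjet₀₀⟩ := hdiag ε (z 0) (z 1) ⟨hε, hz 0, hz 1⟩ (ζ 0) (ζ 1)
  obtain ⟨_, c₁₁, hc₁₁, hjet₁₁⟩ := hdiag ε (z 1) (z 0) ⟨hε, hz 1, hz 0⟩ (ζ 1) (ζ 0)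
  obtain ⟨_, c₀₁, hc₀₁, hjet₀₁⟩ := hoff ε (z 0) (z 1) ⟨hε, hz 0, hz 1⟩ (ζ 0) (ζ 1)
  have h₀₀ : matDirDeriv2 (mob ε) z ζ ζ 0 0 = c₀₀ := matDirDeriv2_apply_of_hasTwoJetAt hjet₀₀
  have h₁₁ : matDirDeriv2 (mob ε) z ζ ζ 1 1 = c₁₁ := matDirDeriv2_apply_of_hasTwoJetAt hjet₁₁
  have h₀₁ : matDirDeriv2 (mob ε) z ζ ζ 0 1 = c₀₁ := matDirDeriv2_apply_of_hasTwoJetAt hjet₀₁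
  have h₁₀ : matDirDeriv2 (mob ε) z ζ ζ 1 0 = c₀₁ := matDirDeriv2_apply_of_hasTwoJetAt hjet₀₁
  have hcross : β 0 * β 1 * c₀₁ ≤ ε * K *
      (|ζ 0 * β 0 * (logisticMob (z 1) * (ζ 0 * β 1))| + |ζ 0 * β 0 * (ζ 1 * β 1)| +
        |ζ 1 * β 1 * (logisticMob (z 0) * (ζ 1 * β 0))|) := by
    calc β 0 * β 1 * c₀₁ ≤ |β 0| * |β 1| * |c₀₁| := by
          rw [← abs_mul, ← abs_mul]
          exact le_abs_self _
      _ ≤ |β 0| * |β 1| * (ε * K *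
          (logisticMob (z 1) * ζ 0 ^ 2 + |ζ 0 * ζ 1| + logisticMob (z 0) * ζ 1 ^ 2)) := by gcongr
      _ = _ := by
          simp only [abs_mul, abs_of_nonneg (logisticMob_nonneg (hz _)), ← sq_abs (ζ _)]
          ring
  rw [dotProduct_mulVec_fin_two, h₀₀, h₀₁, h₁₀, h₁₁]
  linear_combination β 0 ^ 2 * hc₀₀ + 2 * hcross + β 1 ^ 2 * hc₁₁

lemma sum_sq_pos_of_ne_zero {p q : ℝ} {ζ β : Fin 2 → ℝ} (hε : 0 < ε) (hp : p ≠ 0) (hq : q ≠ 0)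
    (hζ : ζ ≠ 0) (hβ : β ≠ 0) :
    0 < (ζ 0 * β 0) ^ 2 + (ζ 1 * β 1) ^ 2 +
      ε * ((p * (ζ 1 * β 0)) ^ 2 + (q * (ζ 0 * β 1)) ^ 2) := by
  obtain ⟨i, hi⟩ := Function.ne_iff.1 hζ
  obtain ⟨j, hj⟩ := Function.ne_iff.1 hβ
  rw [Pi.zero_apply] at hi hj
  fin_cases i <;> fin_cases j <;> dsimp at hi hj <;> positivity

lemma exists_forall_matDirDeriv2_mob_neg : ∃ ε₀ : ℝ, 0 < ε₀ ∧ ε₀ ≤ 1 ∧ ∀ ε : ℝ, 0 < ε → ε ≤ ε₀ →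
    ∀ z : Fin 2 → ℝ, (∀ j, z j ∈ Ioo (0 : ℝ) 1) → ∀ ζ β : Fin 2 → ℝ, ζ ≠ 0 → β ≠ 0 →
      β ⬝ᵥ (matDirDeriv2 (mob ε) z ζ ζ *ᵥ β) < 0 := by
  obtain ⟨C, K, hC, hK, hbound⟩ := exists_matDirDeriv2_mob_le
  have hpos : 0 < 17 + C + K + K ^ 2 := by positivity
  have hone : 1 / (17 + C + K + K ^ 2) ≤ 1 := by
    rw [div_le_one hpos]
    linarith [sq_nonneg K]
  refine ⟨1 / (17 + C + K + K ^ 2), by positivity, hone, fun ε hε hε₀ z hz ζ β hζ hβ => ?_⟩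
  have hneg := concavity_absorption (X := ζ 0 * β 0) (Y := ζ 1 * β 1)
    (U := logisticMob (z 0) * (ζ 1 * β 0)) (V := logisticMob (z 1) * (ζ 0 * β 1)) hε.le
    ((le_div_iff₀ hpos).1 hε₀) hK
  have hform := hbound ε ⟨hε.le, hε₀.trans hone⟩ z (fun j => Ioo_subset_Icc_self (hz j)) ζ β
  have hsum := sum_sq_pos_of_ne_zero hε (logisticMob_pos (hz 0)).ne' (logisticMob_pos (hz 1)).ne'
    hζ hβ
  linarith

end StrengthenedConcavity

section Hessian

lemma logEntropy_eq_neg_binEntropy : logEntropy = -Real.binEntropy := by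
  ext s
  rw [logEntropy, Pi.neg_apply, Real.binEntropy_eq_negMulLog_add_negMulLog_one_sub, Real.negMulLog,
    Real.negMulLog]
  ring

lemma hasDerivAt_logEntropy {s : ℝ} (hs : s ∈ Ioo (0 : ℝ) 1) :
    HasDerivAt logEntropy (Real.log s - Real.log (1 - s)) s := by
  rw [logEntropy_eq_neg_binEntropy]
  simpa using (Real.hasDerivAt_binEntropy hs.1.ne' hs.2.ne).neg

lemma hasDerivAt_log_sub_log_one_sub {s : ℝ} (hs : s ∈ Ioo (0 : ℝ) 1) :
    HasDerivAt (fun s => Real.log s - Real.log (1 - s)) (1 / logisticMob s) s := by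
  have h₀ : s ≠ 0 := hs.1.ne'
  have h₁ : 1 - s ≠ 0 := (sub_pos.2 hs.2).ne'
  refine ((Real.hasDerivAt_log h₀).sub
    (((hasDerivAt_id' s).const_sub 1).log h₁)).congr_deriv ?_
  rw [logisticMob]
  field_simp
  ring

lemma hPert_eq (ε : ℝ) (z : Fin 2 → ℝ) : hPert ε z =
    logEntropy (z 0) + logEntropy (z 1) + ε * (logisticMob (z 0) * logisticMob (z 1)) := by
  rw [hPert, logisticMob, logisticMob]
  ring

/-- The partial derivative of `hPert ε` in the `k`-th coordinate, where `l` is the other index. -/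
def hPertGrad (ε : ℝ) (k l : Fin 2) (z : Fin 2 → ℝ) : ℝ :=
  Real.log (z k) - Real.log (1 - z k) + ε * ((1 - 2 * z k) * logisticMob (z l))

variable {ε : ℝ} {z : Fin 2 → ℝ}

lemma fderiv_hPert (hz : ∀ j, z j ∈ Ioo (0 : ℝ) 1) (v : Fin 2 → ℝ) :
    fderiv ℝ (hPert ε) z v = hPertGrad ε 0 1 z * v 0 + hPertGrad ε 1 0 z * v 1 := by
  have hL (k) := hasFDerivAt_comp_apply (hasDerivAt_logEntropy (hz k))
  have hP (k) := hasFDerivAt_comp_apply (hasDerivAt_logisticMob (z k))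
  have h := ((hL 0).add (hL 1)).add (((hP 0).mul (hP 1)).const_mul ε)
  have heq := (h.congr_of_eventuallyEq (.of_forall (hPert_eq ε))).fderiv
  simp only [heq, hPertGrad, smul_add, _root_.add_apply, _root_.smul_apply,
    ContinuousLinearMap.proj_apply, smul_eq_mul]
  ring

lemma hasFDerivAt_hPertGrad (hz : ∀ j, z j ∈ Ioo (0 : ℝ) 1) (k l : Fin 2) :
    HasFDerivAt (hPertGrad ε k l)
      ((1 / logisticMob (z k) - 2 * ε * logisticMob (z l)) •
          ContinuousLinearMap.proj (R := ℝ) (φ := fun _ : Fin 2 => ℝ) k +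
        (ε * ((1 - 2 * z k) * (1 - 2 * z l))) •
          ContinuousLinearMap.proj (R := ℝ) (φ := fun _ : Fin 2 => ℝ) l) z := by
  have h := (hasFDerivAt_comp_apply (hasDerivAt_log_sub_log_one_sub (hz k))).add
    (((hasFDerivAt_comp_apply (hasDerivAt_one_sub_two_mul (z k))).mul
      (hasFDerivAt_comp_apply (hasDerivAt_logisticMob (z l)))).const_mul ε)
  refine h.congr_fderiv ?_
  ext v
  simp only [smul_add, _root_.add_apply, _root_.smul_apply, ContinuousLinearMap.proj_apply,
    smul_eq_mul]
  ring

lemma eventually_forall_mem_Ioo (hz : ∀ j, z j ∈ Ioo (0 : ℝ) 1) :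
    ∀ᶠ y in 𝓝 z, ∀ j, y j ∈ Ioo (0 : ℝ) 1 :=
  eventually_all.2 fun j => (continuous_apply j).continuousAt.eventually_mem
    (isOpen_Ioo.mem_nhds (hz j))

lemma mobFactor_div_logisticMob {x : ℝ} (hx : logisticMob x ≠ 0) (ε y : ℝ) :
    mobFactor ε x y / logisticMob x = 1 / logisticMob x - 2 * ε * logisticMob y := by
  rw [mobFactor]
  field_simp

lemma hess_hPert (hz : ∀ j, z j ∈ Ioo (0 : ℝ) 1) :
    hess (hPert ε) z =
      !![mobFactor ε (z 0) (z 1) / logisticMob (z 0), ε * ((1 - 2 * z 0) * (1 - 2 * z 1));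
        ε * ((1 - 2 * z 0) * (1 - 2 * z 1)), mobFactor ε (z 1) (z 0) / logisticMob (z 1)] := by
  have hgrad₀ : ∀ᶠ y in 𝓝 z, fderiv ℝ (hPert ε) y (Pi.single 0 1) = hPertGrad ε 0 1 y :=
    (eventually_forall_mem_Ioo hz).mono fun y hy => by simp [fderiv_hPert hy]
  have hgrad₁ : ∀ᶠ y in 𝓝 z, fderiv ℝ (hPert ε) y (Pi.single 1 1) = hPertGrad ε 1 0 y :=
    (eventually_forall_mem_Ioo hz).mono fun y hy => by simp [fderiv_hPert hy]
  have hcol₀ := hess_apply_of_hasFDerivAt hgrad₀ (hasFDerivAt_hPertGrad hz 0 1)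
  have hcol₁ := hess_apply_of_hasFDerivAt hgrad₁ (hasFDerivAt_hPertGrad hz 1 0)
  rw [mobFactor_div_logisticMob (logisticMob_pos (hz 0)).ne',
    mobFactor_div_logisticMob (logisticMob_pos (hz 1)).ne']
  ext i j
  fin_cases i <;> fin_cases j <;> simp [hcol₀, hcol₁, mul_comm (1 - 2 * z 1)]

lemma mob_mul_hess_hPert (hε : ε ∈ Icc (0 : ℝ) 1) (hz : ∀ j, z j ∈ Ioo (0 : ℝ) 1) :
    mob ε z * hess (hPert ε) z = 1 := by
  have hz' (j) := Ioo_subset_Icc_self (hz j)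
  have hD := (mobDet_pos (mem_paramBox.2 ⟨hε, hz' 0, hz' 1⟩)).ne'
  have hp := (logisticMob_pos (hz 0)).ne'
  have hq := (logisticMob_pos (hz 1)).ne'
  rw [hess_hPert hz, mob, Matrix.mul_fin_two, Matrix.one_fin_two]
  simp only [mobDiag, mobOff, mobDet_swap ε (z 0) (z 1), mobFactor_swap ε (z 0) (z 1)]
  congrm !![?_, ?_; ?_, ?_]
  · field_simp
    rw [mobDet]
    ring
  · field_simp
    ring
  · field_simp
    ring
  · field_simp
    rw [mobDet]
    ring

lemma posDef_mob (hε : ε ∈ Icc (0 : ℝ) 1) (hz : ∀ j, z j ∈ Ioo (0 : ℝ) 1) :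
    (mob ε z).PosDef := by
  have hz' (j) := Ioo_subset_Icc_self (hz j)
  have hbox : (ε, z 0, z 1) ∈ paramBox := ⟨hε, hz' 0, hz' 1⟩
  have hD := mobDet_pos hbox
  have hm := mobFactor_pos hbox
  have hp := logisticMob_pos (hz 0)
  have hq := logisticMob_pos (hz 1)
  have hdet : mobDiag ε (z 0) (z 1) * mobDiag ε (z 1) (z 0) - mobOff ε (z 0) (z 1) ^ 2 =
      logisticMob (z 0) * logisticMob (z 1) / mobDet ε (z 0) (z 1) := by
    simp only [mobDiag, mobOff, mobDet_swap ε (z 0) (z 1), mobFactor_swap ε (z 0) (z 1)]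
    field_simp
    rw [mobDet]
    ring
  refine posDef_fin_two_of_pos (div_pos (mul_pos hp hm) hD) ?_
  rw [hdet]
  positivity

lemma mob_eq_inv_hess_hPert (hε : ε ∈ Icc (0 : ℝ) 1) (hz : ∀ j, z j ∈ Ioo (0 : ℝ) 1) :
    mob ε z = (hess (hPert ε) z)⁻¹ :=
  (Matrix.inv_eq_left_inv (mob_mul_hess_hPert hε hz)).symm

lemma posDef_hess_hPert (hε : ε ∈ Icc (0 : ℝ) 1) (hz : ∀ j, z j ∈ Ioo (0 : ℝ) 1) :
    (hess (hPert ε) z).PosDef := by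
  rw [← Matrix.inv_eq_right_inv (mob_mul_hess_hPert hε hz)]
  exact (posDef_mob hε hz).inv

end Hessian

section Mobility

variable {ε : ℝ} {z : Fin 2 → ℝ}

lemma mob_eq_diagonal (hz : z ∈ unitCube 2) (hz' : ¬ ∀ j, z j ∈ Ioo (0 : ℝ) 1) :
    mob ε z = Matrix.diagonal fun j => z j * (1 - z j) := by
  have hr : logisticMob (z 0) * logisticMob (z 1) = 0 := by
    rw [Fin.forall_fin_two, not_and_or] at hz'
    rcases hz' with h | h
    · rw [logisticMob_eq_zero (hz 0) h, zero_mul]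
    · rw [logisticMob_eq_zero (hz 1) h, mul_zero]
  have hm : mobFactor ε (z 0) (z 1) = 1 := by simp [mobFactor, hr]
  have hD : mobDet ε (z 0) (z 1) = 1 := by simp [mobDet, hm, hr]
  have hoff : mobOff ε (z 0) (z 1) = 0 := by simp [mobOff, hr]
  ext i j
  fin_cases i <;> fin_cases j <;>
    simp [mob, hoff, mobDiag, mobFactor_swap ε (z 0), mobDet_swap ε (z 0), hm, hD, logisticMob]

lemma contDiffAt_mob {n : WithTop ℕ∞} (hε : ε ∈ Icc (0 : ℝ) 1) (hz : z ∈ unitCube 2)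
    (i j : Fin 2) : ContDiffAt ℝ n (fun z => mob ε z i j) z := by
  have hdiag (k l : Fin 2) : ContDiffAt ℝ n (fun z : Fin 2 → ℝ => mobDiag ε (z k) (z l)) z :=
    (contDiffAt_mobDiag (mem_paramBox.2 ⟨hε, hz k, hz l⟩)).comp z
      (f := fun z : Fin 2 → ℝ => (ε, z k, z l)) (by fun_prop)
  have hoff : ContDiffAt ℝ n (fun z : Fin 2 → ℝ => mobOff ε (z 0) (z 1)) z :=
    (contDiffAt_mobOff (mem_paramBox.2 ⟨hε, hz 0, hz 1⟩)).comp z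
      (f := fun z : Fin 2 → ℝ => (ε, z 0, z 1)) (by fun_prop)
  fin_cases i <;> fin_cases j
  exacts [hdiag 0 1, hoff, hoff, hdiag 1 0]

lemma isMobility_mob (hε : ε ∈ Icc (0 : ℝ) 1)
    (hconc : ∀ z ∈ interior (unitCube 2), ∀ ζ : Fin 2 → ℝ, ζ ≠ 0 →
      (-matDirDeriv2 (mob ε) z ζ ζ).PosDef) : IsMobility (unitCube 2) (mob ε) where
  cont i j z hz := (contDiffAt_mob (n := 0) hε hz i j).continuousAt.continuousWithinAt
  smooth i j z hz := (contDiffAt_mob hε (interior_subset hz) i j).contDiffWithinAt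
  symm z _ := isSymm_mob ε z
  posDef z hz := posDef_mob hε (by rwa [interior_unitCube] at hz)
  concave z hz ζ := by
    rcases eq_or_ne ζ 0 with rfl | hζ
    · simpa [matDirDeriv2_zero] using Matrix.PosSemidef.zero
    · exact (hconc z hz ζ hζ).posSemidef

end Mobility

/-- the special perturbation of the decoupled logistic mobility
satisfies (C0)-(C3) and the strengthened concavity condition (C2'). -/
theorem perturbed_decoupled_mobility :
    ∃ ε₀ : ℝ, 0 < ε₀ ∧ ∀ ε : ℝ, 0 < ε → ε ≤ ε₀ →
      -- (i) positive definite Hessian (in particular positive determinant) on (0,1)²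
      (∀ z : Fin 2 → ℝ, (∀ j, z j ∈ Set.Ioo (0:ℝ) 1) →
        (hess (hPert ε) z).PosDef ∧ 0 < (hess (hPert ε) z).det) ∧
      -- (ii) the inverse Hessian extends continuously to S = [0,1]²
      --      by the decoupled mobility diag(z_j(1−z_j)) on the boundary,
      --      and the extension satisfies (C0)-(C3) and (C2')
      ∃ M : (Fin 2 → ℝ) → Matrix (Fin 2) (Fin 2) ℝ,
        (∀ z : Fin 2 → ℝ, (∀ j, z j ∈ Set.Ioo (0:ℝ) 1) → M z = (hess (hPert ε) z)⁻¹) ∧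
        (∀ z : Fin 2 → ℝ, (∀ j, z j ∈ Set.Icc (0:ℝ) 1) → ¬ (∀ j, z j ∈ Set.Ioo (0:ℝ) 1) →
          M z = Matrix.diagonal (fun j => z j * (1 - z j))) ∧
        (∀ i j, ContinuousOn (fun z => M z i j) {z : Fin 2 → ℝ | ∀ j, z j ∈ Set.Icc (0:ℝ) 1}) ∧
        -- (iii) strengthened concavity (C2') on (0,1)²
        (∀ z : Fin 2 → ℝ, (∀ j, z j ∈ Set.Ioo (0:ℝ) 1) →
          ∀ ζ β : Fin 2 → ℝ, ζ ≠ 0 → β ≠ 0 →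
            β ⬝ᵥ (matDirDeriv2 M z ζ ζ *ᵥ β) < 0) ∧
        IsMobility {z : Fin 2 → ℝ | ∀ j, z j ∈ Set.Icc (0:ℝ) 1} M ∧
        MobC3 {z : Fin 2 → ℝ | ∀ j, z j ∈ Set.Icc (0:ℝ) 1} M ∧
        (∀ z ∈ interior {z : Fin 2 → ℝ | ∀ j, z j ∈ Set.Icc (0:ℝ) 1},
          ∀ ζ : Fin 2 → ℝ, ζ ≠ 0 → (-(matDirDeriv2 M z ζ ζ)).PosDef) := by
  obtain ⟨ε₀, hε₀, hε₀_le, hneg⟩ := exists_forall_matDirDeriv2_mob_neg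
  refine ⟨ε₀, hε₀, fun ε hε hε_le => ?_⟩
  have hε' : ε ∈ Icc (0 : ℝ) 1 := ⟨hε.le, hε_le.trans hε₀_le⟩
  have hconc : ∀ z ∈ interior (unitCube 2), ∀ ζ : Fin 2 → ℝ, ζ ≠ 0 →
      (-matDirDeriv2 (mob ε) z ζ ζ).PosDef := fun z hz ζ hζ =>
    posDef_neg_matDirDeriv2 (isSymm_mob ε)
      fun β => hneg ε hε hε_le z (by rwa [interior_unitCube] at hz) ζ β hζ
  have hmob := isMobility_mob hε' hconc
  exact ⟨fun z hz => ⟨posDef_hess_hPert hε' hz, (posDef_hess_hPert hε' hz).det_pos⟩, mob ε,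
    fun z => mob_eq_inv_hess_hPert hε', fun z => mob_eq_diagonal, hmob.cont, hneg ε hε hε_le, hmob,
    mobC3_unitCube_of_eq_diagonal fun z => mob_eq_diagonal, hconc⟩

end
end
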